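/- arXiv:2510.13469 — 7 statements merged into one kernel-verified Lean document; each statement's English description precedes it below -/
import Mathlib

section
/- The set I(λ) of all ℤ-linear combinations of the n² matrices Y^i·D(η_s), 0 ≤ i, s ≤ n−1, is a subring of M_n(Z) containing the identity matrix, and it contains every ℤ-linear combination of the matrices U^i·D(η_s), 0 ≤ i, s ≤ n−1 (i.e., I(λ) contains the order I associated with the canonical generation). -/
/-!
Matrices over the maximal order `I(λ)` in a cyclic division algebra of degree `n = 3`
over `ℚ` are sums of squares, provided `σ ≡ 1 (mod 2)`.
-/

set_option synthInstance.maxHeartbeats 1000000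

noncomputable section

/-- `ζ = e^{2πi/p}`, a primitive `p`-th root of unity in `ℂ`. -/
def zetaC (p : ℕ) : ℂ := Complex.exp (2 * Real.pi * Complex.I / p)

/-- The Gaussian period `η_s = ∑_{r=0}^{h-1} ζ^{g^{nr+s}}`. -/
def gaussPeriod (n p h g : ℕ) (s : ℕ) : ℂ :=
  ∑ r ∈ Finset.range h, zetaC p ^ (g ^ (n * r + s))

/-- `Z = ℚ(η)`, the subfield of `ℂ` generated over `ℚ` by the Gaussian period `η = η₀`. -/
def Zf (n p h g : ℕ) : IntermediateField ℚ ℂ :=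
  IntermediateField.adjoin ℚ {gaussPeriod n p h g 0}

/-- `η` as an element of `Z = ℚ(η)`. -/
def etaZ (n p h g : ℕ) : Zf n p h g :=
  ⟨gaussPeriod n p h g 0, IntermediateField.subset_adjoin ℚ _ rfl⟩

/-- `D(z) = diag(z, S(z), …, S^{n-1}(z))` in `M_n(Z)`. -/
def Dm (n p h g : ℕ) (S : Zf n p h g ≃ₐ[ℚ] Zf n p h g) (z : Zf n p h g) :
    Matrix (Fin n) (Fin n) (Zf n p h g) :=
  Matrix.diagonal fun i => (S ^ (i : ℕ)) z

/-- The matrix `U` with `U_{i+1,i} = 1`, `U_{1,n} = σ`, and `0` elsewhere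
(indices written `0`-based). -/
def Um (n p h g : ℕ) (σ : ℕ) : Matrix (Fin n) (Fin n) (Zf n p h g) :=
  Matrix.of fun i j =>
    if (i : ℕ) = (j : ℕ) + 1 then 1
    else if (i : ℕ) = 0 ∧ (j : ℕ) = n - 1 then (σ : Zf n p h g) else 0

/-- `Y = (1/p)·(λ·I − U)·D(α)` with `α = β^{n-1}`. -/
def Ym (n p h g σ : ℕ) (lam : ℤ) (S : Zf n p h g ≃ₐ[ℚ] Zf n p h g) (β : Zf n p h g) :
    Matrix (Fin n) (Fin n) (Zf n p h g) :=
  ((p : Zf n p h g)⁻¹) •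
    (((lam : Zf n p h g) • (1 : Matrix (Fin n) (Fin n) (Zf n p h g)) - Um n p h g σ) *
      Dm n p h g S (β ^ (n - 1)))

/-- The maximal order `I(λ)`: all `ℤ`-linear combinations of the `n²` matrices
`Y^i · D(η_s)`, `0 ≤ i, s ≤ n-1`. -/
def Iorder (n p h g σ : ℕ) (lam : ℤ) (S : Zf n p h g ≃ₐ[ℚ] Zf n p h g) (β : Zf n p h g) :
    Set (Matrix (Fin n) (Fin n) (Zf n p h g)) :=
  { M | ∃ c : Fin n → Fin n → ℤ,
      M = ∑ i : Fin n, ∑ s : Fin n,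
        c i s • (Ym n p h g σ lam S β ^ (i : ℕ) *
          Dm n p h g S ((S ^ (s : ℕ)) (etaZ n p h g))) }

lemma aux_int_mod {R : Type*} [CommRing R] [IsDomain R] (b : R) (hb : b ≠ 0) (p n : ℕ)
    (hp : p.Prime) (hn : n ≠ 0) (hass : Ideal.span {b ^ n} = Ideal.span {(p : R)})
    (e : Fin n → R) (he : ∀ x : R, ∃ c : Fin n → ℤ, x = ∑ i, c i • e i) (x : R) :
    ∃ (m : ℤ) (w : R), x = m + b * w := by
  have := Fact.mk hp
  have : NeZero p := ⟨hp.ne_zero⟩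
  let H : ℕ → AddSubgroup R := fun k => (Ideal.span {b ^ k}).toAddSubgroup
  have hmem : ∀ k y, y ∈ H k ↔ ∃ w, y = b ^ k * w := by
    intro k y
    change y ∈ Ideal.span {b ^ k} ↔ _
    rw [Ideal.mem_span_singleton]; rfl
  have hmap : ∀ k l, (H l).map (AddMonoidHom.mulLeft (b ^ k)) = H (k + l) := by
    intro k l
    ext y
    simp only [AddSubgroup.mem_map, hmem, AddMonoidHom.coe_mulLeft]
    constructor
    · rintro ⟨_, ⟨w, rfl⟩, rfl⟩
      exact ⟨w, by rw [pow_add, mul_assoc]⟩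
    · rintro ⟨w, rfl⟩
      exact ⟨_, ⟨w, rfl⟩, by rw [pow_add, mul_assoc]⟩
  have hrel : ∀ k, (H (k + 1)).relIndex (H k) = (H 1).index := by
    intro k
    have h1 := AddSubgroup.relIndex_map_map_of_injective (H 1) (H 0)
      (f := AddMonoidHom.mulLeft (b ^ k)) (mul_right_injective₀ (pow_ne_zero k hb))
    rw [hmap, hmap] at h1
    have h0 : H 0 = ⊤ := by
      ext y; simp [hmem]
    rw [h0, AddSubgroup.relIndex_top_right] at h1
    exact h1
  have hle : ∀ k, H (k + 1) ≤ H k := by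
    intro k y hy
    rw [hmem] at hy ⊢
    obtain ⟨w, rfl⟩ := hy
    exact ⟨b * w, by rw [pow_succ, mul_assoc]⟩
  have hidx : ∀ k, (H k).index = (H 1).index ^ k := by
    intro k
    induction k with
    | zero =>
      have h0 : H 0 = ⊤ := by
        ext y; simp [hmem]
      simp [h0]
    | succ k ih =>
      rw [← AddSubgroup.relIndex_mul_index (hle k), hrel, ih, pow_succ, mul_comm]
  -- count mod p
  let Q := R ⧸ (Ideal.span {(p : R)})
  have hsurj : Function.Surjective (fun c : Fin n → Fin p =>
      Ideal.Quotient.mk (Ideal.span {(p : R)}) (∑ i, ((c i : ℕ) : R) * e i)) := by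
    intro y
    obtain ⟨y, rfl⟩ := Ideal.Quotient.mk_surjective y
    obtain ⟨c, rfl⟩ := he y
    have hpp : (0 : ℤ) < p := by exact_mod_cast hp.pos
    refine ⟨fun i => ⟨(c i % p).toNat, ?_⟩, ?_⟩
    · have := Int.emod_lt_of_pos (c i) hpp
      have := Int.emod_nonneg (c i) hpp.ne'
      omega
    · rw [Ideal.Quotient.mk_eq_mk_iff_sub_mem, Ideal.mem_span_singleton, ← Finset.sum_sub_distrib]
      refine Finset.dvd_sum fun i _ => ?_
      have h2 : (((c i % p).toNat : ℕ) : R) = ((c i % p : ℤ) : R) := by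
        rw [← Int.cast_natCast, Int.toNat_of_nonneg (Int.emod_nonneg (c i) hpp.ne')]
      refine ⟨-((c i / p : ℤ) : R) * e i, ?_⟩
      dsimp only
      rw [h2, Int.emod_def]
      push_cast
      rw [zsmul_eq_mul]
      ring
  have : Finite Q := Finite.of_surjective _ hsurj
  have hcard : Nat.card Q ≤ p ^ n := by
    have := Nat.card_le_card_of_surjective _ hsurj
    simpa using this
  have hcard2 : (H n).index = Nat.card Q := by
    simp only [H, hass]; rfl
  have hpos : 0 < Nat.card Q := Nat.card_pos
  have hd : (H 1).index ≤ p := by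
    rw [← hcard2, hidx] at hcard
    exact (Nat.pow_le_pow_iff_left hn).1 hcard
  have hd0 : (H 1).index ≠ 0 := by
    intro h0
    rw [← hcard2, hidx, h0, zero_pow hn] at hpos
    exact lt_irrefl _ hpos
  let Q' := R ⧸ (Ideal.span {b})
  have hcQ : Nat.card Q' = (H 1).index := by
    simp only [H, pow_one]; rfl
  have : Finite Q' := Nat.finite_of_card_ne_zero (hcQ ▸ hd0)
  have hp0 : (p : Q') = 0 := by
    have : (p : Q') = Ideal.Quotient.mk (Ideal.span {b}) (p : R) := by simp [Q']
    rw [this, Ideal.Quotient.eq_zero_iff_mem, Ideal.mem_span_singleton]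
    have : (p : R) ∈ Ideal.span {b ^ n} := hass ▸ Ideal.mem_span_singleton_self _
    rw [Ideal.mem_span_singleton] at this
    exact (dvd_pow_self b hn).trans this
  have key : ∃ m : ℤ, (m : Q') = Ideal.Quotient.mk _ x := by
    rcases subsingleton_or_nontrivial Q' with hs | hs
    · exact ⟨0, Subsingleton.elim _ _⟩
    · have : CharP Q' p := by
        have := CharP.exists Q'
        obtain ⟨q, hq⟩ := this
        have hdv := (CharP.cast_eq_zero_iff Q' q p).1 hp0
        rcases (Nat.dvd_prime hp).1 hdv with h1 | h1
        · exact absurd h1 (CharP.char_ne_one Q' q)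
        · exact h1 ▸ hq
      have hinj : Function.Injective (ZMod.castHom (dvd_refl p) Q') := RingHom.injective _
      have hb := Function.Injective.bijective_of_nat_card_le hinj (by rw [hcQ]; simpa using hd)
      obtain ⟨z, hz⟩ := hb.2 (Ideal.Quotient.mk _ x)
      obtain ⟨m, rfl⟩ := ZMod.intCast_surjective z
      exact ⟨m, by rw [← hz]; simp⟩
  obtain ⟨m, hm⟩ := key
  have hm' : Ideal.Quotient.mk (Ideal.span {b}) (x - m) = 0 := by
    rw [map_sub, ← hm]; simp
  rw [Ideal.Quotient.eq_zero_iff_mem, Ideal.mem_span_singleton] at hm'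
  obtain ⟨w, hw⟩ := hm'
  exact ⟨m, w, by rw [← hw]; ring⟩

structure AuxData {Z : Type*} [Field Z] [Algebra ℚ Z] (n p : ℕ) (S : Z ≃ₐ[ℚ] Z)
    (A : Subring Z) (β : Z) : Prop where
  hn : n.Prime
  hp : p.Prime
  hlt : n < p
  hSA : ∀ x ∈ A, S x ∈ A
  hSn : S ^ n = 1
  hTr : ∀ x ∈ A, ∃ m : ℤ, ∑ i ∈ Finset.range n, (S ^ i) x = m
  hβ : β ∈ A
  hu : ∃ u ∈ A, S β = β * u
  hN : ∏ i ∈ Finset.range n, (S ^ i) β = p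
  hgen : ∃ e : Fin n → Z, (∀ i, e i ∈ A) ∧ ∀ x ∈ A, ∃ c : Fin n → ℤ, x = ∑ i, c i • e i

namespace AuxData

variable {Z : Type*} [Field Z] [Algebra ℚ Z] {n p : ℕ} {S : Z ≃ₐ[ℚ] Z}
    {A : Subring Z} {β : Z}

lemma powA (H : AuxData n p S A β) (i : ℕ) : ∀ x ∈ A, (S ^ i) x ∈ A := by
  induction i with
  | zero => intro x hx; simpa using hx
  | succ k ih => intro x hx; rw [pow_succ', AlgEquiv.mul_apply]; exact H.hSA _ (ih x hx)

lemma charZ (_ : AuxData n p S A β) : CharZero Z := algebraRat.charZero Z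

lemma pne (H : AuxData n p S A β) : (p : Z) ≠ 0 := by
  have := H.charZ
  exact_mod_cast H.hp.ne_zero

lemma bne (H : AuxData n p S A β) : β ≠ 0 := by
  intro h
  have h1 := H.hN
  rw [Finset.prod_eq_zero (i := 0) (Finset.mem_range.2 H.hn.pos) (by simp [h])] at h1
  exact H.pne h1.symm

lemma L1 (H : AuxData n p S A β) (i : ℕ) : ∃ v ∈ A, (S ^ i) β = β * v := by
  induction i with
  | zero => exact ⟨1, A.one_mem, by simp⟩
  | succ k ih =>
    obtain ⟨v, hv, h⟩ := ih
    obtain ⟨u, hu, h2⟩ := H.hu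
    refine ⟨u * S v, A.mul_mem hu (H.hSA _ hv), ?_⟩
    rw [pow_succ', AlgEquiv.mul_apply, h, map_mul, h2, mul_assoc]

lemma L1' (H : AuxData n p S A β) (i : ℕ) (hi : i ≤ n) : ∃ v ∈ A, β = (S ^ i) β * v := by
  obtain ⟨v, hv, h⟩ := H.L1 (n - i)
  refine ⟨(S ^ i) v, H.powA _ _ hv, ?_⟩
  rw [← map_mul, ← h, ← AlgEquiv.mul_apply, ← pow_add, Nat.add_sub_cancel' hi, H.hSn]
  rfl

lemma L2 (H : AuxData n p S A β) : ∃ v ∈ A, ∃ v' ∈ A, v * v' = 1 ∧ (p : Z) = β ^ n * v := by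
  choose f hf hf2 using H.L1
  have h1 : ∀ i : ℕ, ∃ v ∈ A, i < n → β = (S ^ i) β * v := by
    intro i
    by_cases hi : i < n
    · obtain ⟨v, hv, h⟩ := H.L1' i hi.le
      exact ⟨v, hv, fun _ => h⟩
    · exact ⟨1, A.one_mem, fun h => absurd h hi⟩
  choose f' hf' hf2' using h1
  have e1 : (p : Z) = β ^ n * ∏ i ∈ Finset.range n, f i := by
    rw [← H.hN, Finset.prod_congr rfl (fun i _ => hf2 i), Finset.prod_mul_distrib]
    simp
  have e2 : β ^ n = p * ∏ i ∈ Finset.range n, f' i := by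
    rw [← H.hN, ← Finset.prod_mul_distrib,
      ← Finset.prod_congr rfl (fun i hi => hf2' i (Finset.mem_range.1 hi))]
    simp
  refine ⟨∏ i ∈ Finset.range n, f i, A.prod_mem fun i _ => hf i,
    ∏ i ∈ Finset.range n, f' i, A.prod_mem fun i _ => hf' i, ?_, e1⟩
  rw [e2, mul_assoc] at e1
  have := mul_left_cancel₀ H.pne ((mul_one (p : Z)).trans e1)
  rw [mul_comm]; exact this.symm

lemma notinv (H : AuxData n p S A β) : ¬ ∃ y ∈ A, (1 : Z) = β * y := by
  rintro ⟨y, hy, h⟩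
  have := H.charZ
  obtain ⟨v, hv, v', hv', hvv, hpv⟩ := H.L2
  have h1 : (1 : Z) = p * (y ^ n * v') := by
    rw [hpv]
    calc (1 : Z) = (β * y) ^ n * (v * v') := by rw [← h, hvv]; simp
      _ = _ := by rw [mul_pow]; ring
  obtain ⟨m, hm⟩ := H.hTr _ (A.mul_mem (A.pow_mem hy n) hv')
  set x := y ^ n * v' with hx
  have h2 : ∀ i, (p : Z) * (S ^ i) x = 1 := by
    intro i
    have := congrArg (S ^ i) h1
    rw [map_mul, map_one, map_natCast] at this
    exact this.symm
  have h3 : (p : Z) * m = n := by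
    rw [← hm, Finset.mul_sum, Finset.sum_congr rfl (fun i _ => h2 i)]; simp
  have h4 : (p : ℤ) * m = n := by exact_mod_cast h3
  have h5 : p ∣ n := by
    have : (p : ℤ) ∣ n := ⟨m, h4.symm⟩
    exact_mod_cast this
  exact absurd (Nat.le_of_dvd H.hn.pos h5) (not_le.2 H.hlt)

lemma intdvd (H : AuxData n p S A β) (m : ℤ) (y : Z) (hy : y ∈ A) (h : (m : Z) = β * y) :
    (p : ℤ) ∣ m := by
  by_contra hnd
  apply H.notinv
  have hc : IsCoprime (p : ℤ) m :=
    (Int.prime_iff_natAbs_prime.2 (by simpa using H.hp)).irreducible.coprime_iff_not_dvd.2 hnd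
  obtain ⟨a, b, hab⟩ := hc
  obtain ⟨v, hv, v', hv', hvv, hpv⟩ := H.L2
  refine ⟨a * (β ^ (n - 1) * v) + b * y, ?_, ?_⟩
  · exact A.add_mem (A.mul_mem (intCast_mem A a) (A.mul_mem (A.pow_mem H.hβ _) hv))
      (A.mul_mem (intCast_mem A b) hy)
  · have h1 : (a : Z) * p + b * m = 1 := by exact_mod_cast congrArg (Int.cast : ℤ → Z) hab
    rw [← h1, h, hpv]
    obtain ⟨k, rfl⟩ : ∃ k, n = k + 1 := ⟨n - 1, by have := H.hn.pos; omega⟩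
    simp only [Nat.add_sub_cancel, pow_succ]
    ring

lemma L3 (H : AuxData n p S A β) (x y : Z) (hx : S x = x) (hy : y ∈ A) (h : x = β * y) :
    ∃ w ∈ A, x = p * w := by
  have hxA : x ∈ A := h ▸ A.mul_mem H.hβ hy
  have hSi : ∀ i, (S ^ i) x = x := by
    intro i
    induction i with
    | zero => simp
    | succ k ih => rw [pow_succ, AlgEquiv.mul_apply, hx, ih]
  obtain ⟨m, hm⟩ := H.hTr x hxA
  have hm2 : (n : Z) * x = m := by
    rw [← hm, Finset.sum_congr rfl (fun i _ => hSi i)]; simp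
  obtain ⟨m', rfl⟩ := H.intdvd m (n * y) (A.mul_mem (natCast_mem A n) hy) (by rw [← hm2, h]; ring)
  have hc : IsCoprime (n : ℤ) (p : ℤ) :=
    Nat.isCoprime_iff_coprime.2 ((Nat.coprime_primes H.hn H.hp).2 H.hlt.ne)
  obtain ⟨a, b, hab⟩ := hc
  refine ⟨a * m' + b * x, A.add_mem (A.mul_mem (intCast_mem A a) (intCast_mem A _))
    (A.mul_mem (intCast_mem A b) hxA), ?_⟩
  have h1 : (a : Z) * n + b * p = 1 := by exact_mod_cast congrArg (Int.cast : ℤ → Z) hab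
  push_cast at hm2
  linear_combination (-x) * h1 + a * hm2

lemma L4 (H : AuxData n p S A β) (z : Z) (hz : z ∈ A) : ∃ w ∈ A, z - S z = β * w := by
  obtain ⟨v, hv, v', hv', hvv, hpv⟩ := H.L2
  obtain ⟨e, he, he2⟩ := H.hgen
  obtain ⟨m, w, hw⟩ := aux_int_mod (R := A) ⟨β, H.hβ⟩
    (fun h => H.bne (congrArg Subtype.val h)) p n H.hp H.hn.ne_zero
    (by
      rw [Ideal.span_singleton_eq_span_singleton]
      refine ⟨⟨⟨v, hv⟩, ⟨v', hv'⟩, Subtype.ext hvv, Subtype.ext (by simpa [mul_comm] using hvv)⟩, ?_⟩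
      apply Subtype.ext
      simp [hpv])
    (fun i => ⟨e i, he i⟩)
    (by
      rintro ⟨x, hx⟩
      obtain ⟨c, hc⟩ := he2 x hx
      refine ⟨c, Subtype.ext ?_⟩
      simpa using hc) ⟨z, hz⟩
  have hw' : z = m + β * w := by simpa using congrArg Subtype.val hw
  obtain ⟨u, hu, hub⟩ := H.hu
  refine ⟨w - u * S w, A.sub_mem w.2 (A.mul_mem hu (H.hSA _ w.2)), ?_⟩
  have : S z = m + β * u * S w := by
    conv_lhs => rw [hw']
    rw [map_add, map_mul, hub, map_intCast]
  rw [this]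
  linear_combination hw'

/-- the element `S^{-1}`. -/
lemma TS (H : AuxData n p S A β) (x : Z) : S ((S ^ (n - 1)) x) = x := by
  rw [← AlgEquiv.mul_apply, ← pow_succ', Nat.sub_add_cancel H.hn.one_le, H.hSn]; rfl

lemma ST (H : AuxData n p S A β) (x : Z) : (S ^ (n - 1)) (S x) = x := by
  rw [← AlgEquiv.mul_apply, ← pow_succ, Nat.sub_add_cancel H.hn.one_le, H.hSn]; rfl

open Polynomial in
lemma coeffA (b : Z) (A : Subring Z) (a : ℕ → Z) (ha : ∀ i, b * a i ∈ A) (m : ℕ) :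
    ∀ j k, m = j + k →
      b ^ k * (∏ i ∈ Finset.range m, (X - C (a i))).coeff j ∈ A := by
  induction m with
  | zero =>
    intro j k h
    obtain rfl : j = 0 := by omega
    obtain rfl : k = 0 := by omega
    simp
  | succ m ih =>
    intro j k h
    rw [Finset.prod_range_succ]
    set f := ∏ i ∈ Finset.range m, (X - C (a i)) with hf
    have hdeg : f.natDegree = m := by rw [hf, natDegree_finsetProd_X_sub_C_eq_card]; simp
    cases j with
    | zero =>
      obtain rfl : k = m + 1 := by omega
      have : b ^ (m + 1) * (f * (X - C (a m))).coeff 0 = -((b ^ m * f.coeff 0) * (b * a m)) := by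
        simp [mul_coeff_zero]; ring
      rw [this]
      exact A.neg_mem (A.mul_mem (ih 0 m (by omega)) (ha m))
    | succ j =>
      rw [coeff_mul_X_sub_C, mul_sub]
      refine A.sub_mem (ih j k (by omega)) ?_
      cases k with
      | zero => rw [coeff_eq_zero_of_natDegree_lt (by omega)]; simp
      | succ k =>
        have : b ^ (k + 1) * (f.coeff (j + 1) * a m) = (b ^ k * f.coeff (j + 1)) * (b * a m) := by
          ring
        rw [this]
        exact A.mul_mem (ih _ _ (by omega)) (ha m)

lemma normT (H : AuxData n p S A β) :
    ∏ i ∈ Finset.range n, ((S ^ (n - 1)) ^ i) β = p := by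
  have : ∀ i ∈ Finset.range n, ((S ^ (n - 1)) ^ (n - 1 - i)) β = S ((S ^ i) β) := by
    intro i hi
    have hi := Finset.mem_range.1 hi
    have h0 : (S ^ (n - 1)) = S⁻¹ := by
      rw [eq_inv_iff_mul_eq_one, ← pow_succ, Nat.sub_add_cancel H.hn.one_le, H.hSn]
    have h1 : (S ^ (n - 1)) ^ (n - 1 - i) = S ^ (i + 1) := by
      rw [h0, inv_pow, inv_eq_iff_mul_eq_one, ← pow_add]
      rw [show n - 1 - i + (i + 1) = n by omega, H.hSn]
    rw [h1, pow_succ']; rfl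
  rw [← Finset.prod_range_reflect, Finset.prod_congr rfl this, ← map_prod, H.hN, map_natCast]

open Polynomial in
/-- the characteristic polynomial -/
lemma poly (H : AuxData n p S A β) (lam : ℤ) (a : Z) (ha : a = lam * (β ^ (n - 1) / p)) :
    (∀ j, 0 < j → j < n →
      (∏ i ∈ Finset.range n, (X - C (((S ^ (n - 1)) ^ i) a))).coeff j ∈ A) ∧
    (∏ i ∈ Finset.range n, (X - C (((S ^ (n - 1)) ^ i) a))).coeff 0 =
      (-1) ^ n * (lam : Z) ^ n / (p : Z) := by
  have hb := H.bne
  have hp0 := H.pne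
  obtain ⟨v, hv, v', hv', hvv, hpv⟩ := H.L2
  set P := ∏ i ∈ Finset.range n, (X - C (((S ^ (n - 1)) ^ i) a)) with hP
  obtain ⟨N, hN⟩ : ∃ N, n = N + 1 := ⟨n - 1, by have := H.hn.pos; omega⟩
  have hba : ∀ i, β * ((S ^ (n - 1)) ^ i) a ∈ A := by
    intro i
    rw [← pow_mul]
    obtain ⟨t, ht, h⟩ := H.L1 ((n - 1) * i)
    have : β * (S ^ ((n - 1) * i)) a = lam * (t ^ (n - 1) * v') := by
      rw [ha, map_mul, map_div₀, map_pow, h, map_natCast, map_intCast]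
      have hv0 : v ≠ 0 := left_ne_zero_of_mul_eq_one hvv
      rw [hpv]
      field_simp
      rw [hN, Nat.add_sub_cancel]
      linear_combination (-(lam : Z) * β ^ (N+1) * t ^ N) * hvv
    rw [this]
    exact A.mul_mem (intCast_mem A _) (A.mul_mem (A.pow_mem ht _) hv')
  constructor
  · intro j hj0 hjn
    have hinv : P.map (S : Z →+* Z) = P := by
      have hQ : P.map ((S ^ (n - 1) : Z ≃ₐ[ℚ] Z) : Z →+* Z) = P := by
        rw [hP, Polynomial.map_prod]
        have : ∀ i, (X - C (((S ^ (n - 1)) ^ i) a)).map ((S ^ (n - 1) : Z ≃ₐ[ℚ] Z) : Z →+* Z)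
            = X - C (((S ^ (n - 1)) ^ (i + 1)) a) := by
          intro i
          rw [Polynomial.map_sub, map_X, map_C, pow_succ' _ i]; rfl
        rw [Finset.prod_congr rfl (fun i _ => this i)]
        have h1 := Finset.prod_range_succ (fun i => X - C (((S ^ (n - 1)) ^ i) a)) n
        have h2 := Finset.prod_range_succ' (fun i => X - C (((S ^ (n - 1)) ^ i) a)) n
        rw [h1] at h2
        have h3 : (S ^ (n - 1)) ^ n = 1 := by rw [← pow_mul, mul_comm, pow_mul, H.hSn, one_pow]
        rw [h3, pow_zero] at h2
        exact (mul_right_cancel₀ (X_sub_C_ne_zero _) h2).symm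
      conv_lhs => rw [← hQ]
      rw [Polynomial.map_map]
      ext k
      rw [coeff_map]
      exact H.TS _
    have hc : S (P.coeff j) = P.coeff j := by
      have := congrArg (fun q => coeff q j) hinv
      simpa [coeff_map] using this
    have h1 := coeffA β A _ hba n j (n - j) (by omega)
    rw [← hP] at h1
    obtain ⟨w, hw, h2⟩ := H.L3 (p * P.coeff j) (β ^ (j - 1) * v * (β ^ (n - j) * P.coeff j))
      (by rw [map_mul, hc, map_natCast])
      (A.mul_mem (A.mul_mem (A.pow_mem H.hβ _) hv) h1)
      (by
        rw [hpv]
        have : β ^ n = β * β ^ (j - 1) * β ^ (n - j) := by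
          rw [← pow_succ', ← pow_add]; congr 1; omega
        rw [this]; ring)
    rw [mul_left_cancel₀ hp0 h2]; exact hw
  · rw [hP, coeff_zero_eq_eval_zero, eval_prod]
    have : ∀ i, eval 0 (X - C (((S ^ (n - 1)) ^ i) a)) =
        (-1) * (lam / p) * ((((S ^ (n - 1)) ^ i) β) ^ (n - 1)) := by
      intro i
      simp only [eval_sub, eval_X, eval_C]
      rw [ha, map_mul, map_div₀, map_pow, map_natCast, map_intCast]
      ring
    rw [Finset.prod_congr rfl (fun i _ => this i), Finset.prod_mul_distrib, Finset.prod_pow,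
      H.normT]
    simp only [Finset.prod_const, Finset.card_range]
    rw [hN, Nat.add_sub_cancel, mul_pow, div_pow]
    field_simp
    rw [mul_assoc, ← pow_succ]

end AuxData

/-- additive span of `Y^i D(z)`, `i < k`, `z ∈ A` -/
def auxM {Z B : Type*} [Field Z] [Ring B] (A : Subring Z) (D : Z →+* B) (Y : B) (k : ℕ) :
    AddSubgroup B :=
  AddSubgroup.closure {x | ∃ i < k, ∃ z ∈ A, x = Y ^ i * D z}

section auxM

variable {Z B : Type*} [Field Z] [Ring B] {A : Subring Z} {D : Z →+* B} {Y : B}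

lemma auxM_mono {k l : ℕ} (h : k ≤ l) : auxM A D Y k ≤ auxM A D Y l :=
  AddSubgroup.closure_mono (by
    rintro x ⟨i, hi, z, hz, rfl⟩
    exact ⟨i, hi.trans_le h, z, hz, rfl⟩)

lemma auxM_basic {k i : ℕ} (h : i < k) {z : Z} (hz : z ∈ A) : Y ^ i * D z ∈ auxM A D Y k :=
  AddSubgroup.subset_closure ⟨i, h, z, hz, rfl⟩

lemma auxM_leftY {k : ℕ} {x : B} (hx : x ∈ auxM A D Y k) : Y * x ∈ auxM A D Y (k + 1) := by
  induction hx using AddSubgroup.closure_induction with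
  | mem x hx =>
    obtain ⟨i, hi, z, hz, rfl⟩ := hx
    rw [← mul_assoc, ← pow_succ']
    exact auxM_basic (by omega) hz
  | zero => rw [mul_zero]; exact zero_mem _
  | add x y _ _ h1 h2 => rw [mul_add]; exact add_mem h1 h2
  | neg x _ h => rw [mul_neg]; exact neg_mem h

lemma auxM_rightD {k : ℕ} {x : B} (hx : x ∈ auxM A D Y k) {w : Z} (hw : w ∈ A) :
    x * D w ∈ auxM A D Y k := by
  induction hx using AddSubgroup.closure_induction with
  | mem x hx =>
    obtain ⟨i, hi, z, hz, rfl⟩ := hx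
    rw [mul_assoc, ← map_mul]
    exact auxM_basic hi (A.mul_mem hz hw)
  | zero => rw [zero_mul]; exact zero_mem _
  | add x y _ _ h1 h2 => rw [add_mul]; exact add_mem h1 h2
  | neg x _ h => rw [neg_mul]; exact neg_mem h

lemma auxM_DY (h : ∀ z ∈ A, ∃ z1 ∈ A, ∃ z2 ∈ A, D z * Y = Y * D z1 + D z2) (i : ℕ) :
    ∀ z ∈ A, D z * Y ^ i ∈ auxM A D Y (i + 1) := by
  induction i with
  | zero =>
    intro z hz
    have := auxM_basic (A := A) (D := D) (Y := Y) (k := 1) (i := 0) (by omega) hz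
    simpa using this
  | succ i ih =>
    intro z hz
    obtain ⟨z1, h1, z2, h2, e⟩ := h z hz
    rw [pow_succ', ← mul_assoc, e, add_mul, mul_assoc]
    exact add_mem (auxM_leftY (ih z1 h1)) (auxM_mono (by omega) (ih z2 h2))

lemma auxM_leftD (h : ∀ z ∈ A, ∃ z1 ∈ A, ∃ z2 ∈ A, D z * Y = Y * D z1 + D z2)
    {k : ℕ} {x : B} (hx : x ∈ auxM A D Y k) {w : Z} (hw : w ∈ A) :
    D w * x ∈ auxM A D Y k := by
  induction hx using AddSubgroup.closure_induction with
  | mem x hx =>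
    obtain ⟨i, hi, z, hz, rfl⟩ := hx
    rw [← mul_assoc]
    exact auxM_rightD (auxM_mono (by omega) (auxM_DY h i w hw)) hz
  | zero => rw [mul_zero]; exact zero_mem _
  | add x y _ _ h1 h2 => rw [mul_add]; exact add_mem h1 h2
  | neg x _ h => rw [mul_neg]; exact neg_mem h

lemma auxM_leftY' {n : ℕ} (hn : Y ^ n ∈ auxM A D Y n) {x : B} (hx : x ∈ auxM A D Y n) :
    Y * x ∈ auxM A D Y n := by
  induction hx using AddSubgroup.closure_induction with
  | mem x hx =>
    obtain ⟨i, hi, z, hz, rfl⟩ := hx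
    rw [← mul_assoc, ← pow_succ']
    rcases Nat.lt_or_ge (i + 1) n with h | h
    · exact auxM_basic h hz
    · rw [show i + 1 = n by omega]
      exact auxM_rightD hn hz
  | zero => rw [mul_zero]; exact zero_mem _
  | add x y _ _ h1 h2 => rw [mul_add]; exact add_mem h1 h2
  | neg x _ h => rw [mul_neg]; exact neg_mem h

lemma auxM_mul (h : ∀ z ∈ A, ∃ z1 ∈ A, ∃ z2 ∈ A, D z * Y = Y * D z1 + D z2)
    {n : ℕ} (hn : Y ^ n ∈ auxM A D Y n) {x y : B} (hx : x ∈ auxM A D Y n)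
    (hy : y ∈ auxM A D Y n) : x * y ∈ auxM A D Y n := by
  induction hx using AddSubgroup.closure_induction with
  | mem x hx =>
    obtain ⟨i, hi, z, hz, rfl⟩ := hx
    rw [mul_assoc]
    clear hi
    induction i with
    | zero => simpa using auxM_leftD h hy hz
    | succ i ih => rw [pow_succ', mul_assoc]; exact auxM_leftY' hn ih
  | zero => rw [zero_mul]; exact zero_mem _
  | add x y _ _ h1 h2 => rw [add_mul]; exact add_mem h1 h2
  | neg x _ h => rw [neg_mul]; exact neg_mem h

end auxM

open Polynomial in
/-- `(-V)^k` is a left evaluation of `∏ (X - T^i a)` at `Y = D a - V`. -/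
lemma aux_eval {Z B : Type*} [Field Z] [Algebra ℚ Z] [Ring B] (D : Z →+* B) (T : Z ≃ₐ[ℚ] Z)
    (V Y : B) (a : Z) (hV : ∀ z, V * D z = D (T z) * V) (hY : Y = D a - V) (k : ℕ) :
    (-V) ^ k = eval₂ D Y (∏ i ∈ Finset.range k, (X - C ((T ^ i) a))) := by
  have key : ∀ f : Z[X], (-V) * eval₂ D Y f = eval₂ D Y (f.map (T : Z →+* Z) * (X - C a)) := by
    intro f
    induction f using Polynomial.induction_on' with
    | add p q hp hq => rw [eval₂_add, mul_add, hp, hq, Polynomial.map_add, add_mul, eval₂_add]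
    | monomial j c =>
      rw [map_monomial, mul_sub, eval₂_sub, eval₂_mul_X, monomial_mul_C, eval₂_monomial,
        eval₂_monomial, eval₂_monomial]
      have h1 : -V = Y - D a := by rw [hY]; abel
      have h2 : (-V) * (D c * Y ^ j) = D (T c) * (-V) * Y ^ j := by
        rw [← mul_assoc, neg_mul, hV, mul_neg]
      rw [h2, h1, map_mul]
      rw [mul_sub, sub_mul, mul_assoc, ← pow_succ', mul_assoc (D _) _ Y, ← pow_succ]
      rfl
  induction k with
  | zero => simp
  | succ k ih =>
    rw [pow_succ', ih, key, Finset.prod_range_succ', Polynomial.map_prod]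
    congr 2
    apply Finset.prod_congr rfl
    intro i _
    rw [Polynomial.map_sub, map_X, map_C, pow_succ' _ i]; rfl

lemma aux_Vpow {Z B : Type*} [Field Z] [Algebra ℚ Z] [Ring B] (D : Z →+* B) (S : Z ≃ₐ[ℚ] Z)
    (U : B) (w : Z) (hU : ∀ z, D z * U = U * D (S z)) (k : ℕ) :
    (U * D w) ^ k = U ^ k * D (∏ i ∈ Finset.range k, (S ^ i) w) := by
  induction k with
  | zero => simp
  | succ k ih =>
    rw [pow_succ, ih, Finset.prod_range_succ', pow_succ U, map_mul D]
    have : S (∏ i ∈ Finset.range k, (S ^ i) w) = ∏ i ∈ Finset.range k, (S ^ (i + 1)) w := by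
      rw [map_prod]
      exact Finset.prod_congr rfl fun i _ => by rw [pow_succ' _ i]; rfl
    rw [← this]
    simp only [mul_assoc]
    rw [← mul_assoc (D _) U, hU]
    simp [mul_assoc]

open Polynomial in
theorem aux_core {Z B : Type*} [Field Z] [Algebra ℚ Z] [Ring B] {n p : ℕ} {S : Z ≃ₐ[ℚ] Z}
    {A : Subring Z} {β : Z} (H : AuxData n p S A β) (D : Z →+* B) (U : B)
    (hU : ∀ z, D z * U = U * D (S z)) (σ : ℕ) (lam : ℤ) (hUn : U ^ n = D σ)
    (hlam : (p : ℤ) ∣ lam ^ n - σ) (Y : B)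
    (hY : Y = (D lam - U) * D (β ^ (n - 1) / p)) :
    (∃ R : Subring B, ∀ x, x ∈ R ↔ x ∈ auxM A D Y n) ∧ U ∈ auxM A D Y n := by
  have hp0 := H.pne
  have hb := H.bne
  obtain ⟨v, hv, v', hv', hvv, hpv⟩ := H.L2
  have hv0 : v ≠ 0 := left_ne_zero_of_mul_eq_one hvv
  obtain ⟨N, hN⟩ : ∃ N, n = N + 1 := ⟨n - 1, by have := H.hn.pos; omega⟩
  have hDc : ∀ z, D z * D lam = D lam * D z := fun z => by rw [← map_mul, mul_comm, map_mul]
  have hcomm : ∀ z ∈ A, ∃ z1 ∈ A, ∃ z2 ∈ A, D z * Y = Y * D z1 + D z2 := by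
    intro z hz
    obtain ⟨w, hw, e⟩ := H.L4 z hz
    refine ⟨S z, H.hSA z hz, lam * (w * v'),
      A.mul_mem (intCast_mem A _) (A.mul_mem hw hv'), ?_⟩
    have h1 : (lam : Z) * (w * v') = lam * (z - S z) * (β ^ (n - 1) / p) := by
      rw [e, hpv]
      field_simp
      rw [hN, Nat.add_sub_cancel]
      linear_combination ((lam : Z) * β ^ (N+1) * w) * hvv
    rw [h1, hY]
    have h2 : Y * D (S z) = (D lam - U) * D (S z) * D (β ^ (n - 1) / p) := by
      rw [hY, mul_assoc, mul_assoc, ← map_mul, mul_comm (_ / _), map_mul]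
    rw [hY] at h2
    rw [h2, map_mul D, ← add_mul, ← mul_assoc]
    congr 1
    rw [mul_sub, hU, sub_mul, map_mul, map_sub, mul_sub, hDc]
    abel
  have hYn : Y ^ n ∈ auxM A D Y n := by
    set w := β ^ (n - 1) / p with hw
    set a : Z := lam * w with ha
    obtain ⟨hc, hc0⟩ := H.poly lam a ha
    have hY2 : Y = D a - U * D w := by rw [hY, sub_mul, ha, map_mul]
    have e1 := aux_eval D (S ^ (n - 1)) (U * D w) Y a (by
      intro z
      have h := hU ((S ^ (n - 1)) z)
      rw [H.TS] at h
      rw [← mul_assoc, h, mul_assoc, mul_assoc, ← map_mul, ← map_mul, mul_comm]) hY2 n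
    have e2 : ∏ i ∈ Finset.range n, (S ^ i) w = 1 / p := by
      have : ∀ i, (S ^ i) w = ((S ^ i) β) ^ (n - 1) / p := by
        intro i; rw [hw, map_div₀, map_pow, map_natCast]
      rw [Finset.prod_congr rfl (fun i _ => this i), Finset.prod_div_distrib, Finset.prod_pow,
        H.hN, Finset.prod_const, Finset.card_range]
      rw [hN, Nat.add_sub_cancel]
      field_simp
      rw [pow_succ]
    set P := ∏ i ∈ Finset.range n, (X - C (((S ^ (n - 1)) ^ i) a)) with hP
    have hdeg : P.natDegree = n := by rw [hP, natDegree_finsetProd_X_sub_C_eq_card]; simp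
    have hmon : P.coeff n = 1 := by
      have : P.Monic := monic_prod_of_monic _ _ fun i _ => monic_X_sub_C _
      rw [← hdeg]; exact this
    rw [neg_pow, aux_Vpow D S U w hU, e2, hUn, eval₂_eq_sum_range, hdeg, Finset.sum_range_succ,
      hmon, map_one, one_mul] at e1
    have e3 : Y ^ n = D ((-1) ^ n * (σ / p)) - ∑ j ∈ Finset.range n, D (P.coeff j) * Y ^ j := by
      rw [eq_sub_iff_add_eq, add_comm, ← e1]
      simp [map_mul, div_eq_mul_inv]
    rw [hN, Finset.sum_range_succ', ← hN, hc0] at e3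
    obtain ⟨m, hm⟩ := hlam
    have hm' : (lam : Z) ^ n - σ = p * m := by exact_mod_cast congrArg (Int.cast : ℤ → Z) hm
    have e4 : Y ^ n = D (-((-1) ^ n * m)) -
        ∑ j ∈ Finset.range N, D (P.coeff (j + 1)) * Y ^ (j + 1) := by
      rw [e3, pow_zero, mul_one, sub_add_eq_sub_sub, sub_right_comm, ← map_sub]
      congr 2
      field_simp
      linear_combination (-1 : Z) * hm'
    rw [e4]
    refine sub_mem ?_ (sum_mem fun j hj => ?_)
    · have := auxM_basic (A := A) (D := D) (Y := Y) (k := n) (i := 0) H.hn.pos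
        (z := -((-1) ^ n * (m : Z)))
        (A.neg_mem (A.mul_mem (A.pow_mem (A.neg_mem A.one_mem) _) (intCast_mem A m)))
      simpa using this
    · have hj := Finset.mem_range.1 hj
      exact auxM_mono (by omega) (auxM_DY hcomm (j + 1) _ (hc _ (by omega) (by omega)))
  have hD : ∀ z ∈ A, D z ∈ auxM A D Y n := by
    intro z hz
    have := auxM_basic (A := A) (D := D) (Y := Y) (k := n) (i := 0) H.hn.pos hz
    simpa using this
  refine ⟨⟨{ auxM A D Y n with
      mul_mem' := fun hx hy => auxM_mul hcomm hYn hx hy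
      one_mem' := by
        have := hD 1 A.one_mem
        rwa [map_one] at this }, fun x => Iff.rfl⟩, ?_⟩
  have hUe : U = D lam - Y ^ 1 * D (β * v) := by
    rw [pow_one, hY, mul_assoc, ← map_mul]
    have : β ^ (n - 1) / p * (β * v) = 1 := by
      rw [hpv, hN, Nat.add_sub_cancel]
      field_simp
      rw [pow_succ]
    rw [this]; simp
  rw [hUe]
  exact sub_mem (hD _ (intCast_mem A _)) (auxM_basic H.hn.one_lt (A.mul_mem H.hβ hv))

section concrete

open AddMonoidAlgebra

lemma zetaC_prim (p : ℕ) (hp : p ≠ 0) : IsPrimitiveRoot (zetaC p) p :=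
  Complex.isPrimitiveRoot_exp p hp

/-- the additive character `a ↦ ζ^a` -/
def auxchi (p : ℕ) [Fact p.Prime] : AddChar (ZMod p) ℂ :=
  AddChar.zmodChar p (zetaC_prim p (Fact.out : p.Prime).ne_zero).pow_eq_one

lemma auxchi_nat (p : ℕ) [Fact p.Prime] (k : ℕ) : auxchi p (k : ZMod p) = zetaC p ^ k :=
  AddChar.zmodChar_apply' _ k

lemma auxchi_sum (p : ℕ) [Fact p.Prime] (c : ZMod p) (hc : c ≠ 0) : ∑ a, auxchi p (c * a) = 0 := by
  have hp : p.Prime := Fact.out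
  have h1 : auxchi p ≠ 1 := by
    intro h
    have h2 := auxchi_nat p 1
    rw [h] at h2
    have h3 := (zetaC_prim p hp.ne_zero).ne_one hp.one_lt
    apply h3
    simpa using h2.symm
  have h2 := AddChar.sum_eq_zero_of_ne_one h1
  rw [← h2]
  exact Fintype.sum_equiv (Equiv.mulLeft₀ c hc) _ _ (fun a => rfl)

/-- evaluation of the group ring -/
def auxev (p : ℕ) [Fact p.Prime] : AddMonoidAlgebra ℤ (ZMod p) →+* ℂ :=
  ((AddMonoidAlgebra.lift ℤ ℂ (ZMod p)) (auxchi p).toMonoidHom : _ →ₐ[ℤ] ℂ)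

lemma auxev_single (p : ℕ) [Fact p.Prime] (a : ZMod p) (k : ℤ) :
    auxev p (single a k) = k * auxchi p a := by
  have := AddMonoidAlgebra.lift_single (R := ℤ) (A := ℂ) (auxchi p).toMonoidHom a k
  rw [zsmul_eq_mul] at this
  exact this

/-- multiplication by `c` on the exponents -/
def auxm (p : ℕ) (c : ZMod p) : AddMonoidAlgebra ℤ (ZMod p) →+* AddMonoidAlgebra ℤ (ZMod p) :=
  AddMonoidAlgebra.mapDomainRingHom ℤ (AddMonoidHom.mulLeft c)

lemma auxm_single (p : ℕ) (c a : ZMod p) (k : ℤ) :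
    auxm p c (single a k) = single (c * a) k := by
  simp [auxm]

lemma aux_decomp (p : ℕ) [Fact p.Prime] (F : AddMonoidAlgebra ℤ (ZMod p)) :
    F = ∑ a, single a (F.coeff a) := by
  conv_lhs => rw [← sum_coeff_single F]
  rw [Finsupp.sum_fintype]
  simp

lemma auxm_mul (p : ℕ) [Fact p.Prime] (c d : ZMod p) (F : AddMonoidAlgebra ℤ (ZMod p)) :
    auxm p c (auxm p d F) = auxm p (c * d) F := by
  rw [aux_decomp p F]
  simp only [map_sum, auxm_single, mul_assoc]

lemma auxm_coeff (p : ℕ) [Fact p.Prime] (c : ZMod p) (hc : c ≠ 0)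
    (F : AddMonoidAlgebra ℤ (ZMod p)) (a : ZMod p) :
    (auxm p c F).coeff (c * a) = F.coeff a := by
  rw [auxm, mapDomainRingHom_apply, coeff_mapDomain]
  exact Finsupp.mapDomain_apply (mul_right_injective₀ hc) _ _

lemma auxev_m (p : ℕ) [Fact p.Prime] (c : ZMod p) (F : AddMonoidAlgebra ℤ (ZMod p)) :
    auxev p (auxm p c F) = ∑ a, (F.coeff a : ℂ) * auxchi p (c * a) := by
  conv_lhs => rw [aux_decomp p F]
  simp only [map_sum, auxm_single, auxev_single]

lemma aux_image (p : ℕ) [Fact p.Prime] {ι : Type*} (s : Finset ι) (φ : ι → ZMod p)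
    (hinj : Set.InjOn φ s) (h0 : ∀ i ∈ s, φ i ≠ 0) (hcard : s.card = p - 1) :
    (Finset.univ.erase (0 : ZMod p)) = s.image φ := by
  symm
  apply Finset.eq_of_subset_of_card_le
  · intro a ha
    obtain ⟨i, hi, rfl⟩ := Finset.mem_image.1 ha
    simp [h0 i hi]
  · rw [Finset.card_image_of_injOn hinj, hcard]
    simp [Finset.card_erase_of_mem, ZMod.card]

lemma aux_gimage (n p h g : ℕ) [Fact p.Prime] (hn : 0 < n) (hph : p = n * h + 1)
    (hg : orderOf (g : ZMod p) = p - 1) (hg0 : (g : ZMod p) ≠ 0) :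
    Set.InjOn (fun x : ℕ × ℕ => (g : ZMod p) ^ (n * x.2 + x.1))
      (Finset.range n ×ˢ Finset.range h : Finset (ℕ × ℕ)) ∧
    (Finset.univ.erase (0 : ZMod p)) =
      (Finset.range n ×ˢ Finset.range h).image (fun x => (g : ZMod p) ^ (n * x.2 + x.1)) := by
  have hinj : Set.InjOn (fun x : ℕ × ℕ => (g : ZMod p) ^ (n * x.2 + x.1))
      (Finset.range n ×ˢ Finset.range h : Finset (ℕ × ℕ)) := by
    rintro ⟨i, r⟩ h1 ⟨j, t⟩ h2 h12
    simp only [Finset.coe_product, Finset.coe_range, Set.mem_prod, Set.mem_Iio] at h1 h2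
    have hlt : ∀ i r, i < n → r < h → n * r + i < orderOf (g : ZMod p) := by
      intro i r hi hr
      rw [hg, hph, Nat.add_sub_cancel]
      calc n * r + i < n * r + n := by omega
        _ = n * (r + 1) := by ring
        _ ≤ n * h := Nat.mul_le_mul_left _ hr
    have := pow_injOn_Iio_orderOf (hlt i r h1.1 h1.2) (hlt j t h2.1 h2.2) h12
    have e1 : (n * r + i) % n = i := by rw [Nat.mul_add_mod, Nat.mod_eq_of_lt h1.1]
    have e2 : (n * t + j) % n = j := by rw [Nat.mul_add_mod, Nat.mod_eq_of_lt h2.1]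
    have hij : i = j := by rw [← e1, ← e2, this]
    subst hij
    have : n * r = n * t := by omega
    rw [Nat.eq_of_mul_eq_mul_left hn this]
  refine ⟨hinj, aux_image p _ _ hinj (fun i _ => pow_ne_zero _ hg0) ?_⟩
  simp [hph]

lemma aux_gsum (n p h g : ℕ) [Fact p.Prime] (hn : 0 < n) (hph : p = n * h + 1)
    (hg : orderOf (g : ZMod p) = p - 1) (hg0 : (g : ZMod p) ≠ 0) (f : ZMod p → ℂ) :
    ∑ a ∈ Finset.univ.erase 0, f a =
      ∑ i ∈ Finset.range n, ∑ r ∈ Finset.range h, f ((g : ZMod p) ^ (n * r + i)) := by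
  obtain ⟨h1, h2⟩ := aux_gimage n p h g hn hph hg hg0
  rw [h2, Finset.sum_image h1, Finset.sum_product]

lemma aux_gprod (n p h g : ℕ) [Fact p.Prime] (hn : 0 < n) (hph : p = n * h + 1)
    (hg : orderOf (g : ZMod p) = p - 1) (hg0 : (g : ZMod p) ≠ 0) (f : ZMod p → ℂ) :
    ∏ a ∈ Finset.univ.erase 0, f a =
      ∏ i ∈ Finset.range n, ∏ r ∈ Finset.range h, f ((g : ZMod p) ^ (n * r + i)) := by
  obtain ⟨h1, h2⟩ := aux_gimage n p h g hn hph hg hg0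
  rw [h2, Finset.prod_image h1, Finset.prod_product]

lemma aux_norm (p : ℕ) [Fact p.Prime] :
    ∏ a ∈ Finset.univ.erase (0 : ZMod p), (1 - auxchi p a) = p := by
  have hp : p.Prime := Fact.out
  have hp1 : p - 1 + 1 = p := Nat.sub_add_cancel hp.one_le
  have hinj : Set.InjOn (fun k : ℕ => ((k + 1 : ℕ) : ZMod p)) (Finset.range (p - 1)) := by
    intro i hi j hj hij
    simp only [Finset.coe_range, Set.mem_Iio] at hi hj
    have := (ZMod.natCast_eq_natCast_iff' _ _ _).1 hij
    rw [Nat.mod_eq_of_lt (by omega), Nat.mod_eq_of_lt (by omega)] at this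
    omega
  have h2 := aux_image p (Finset.range (p - 1)) (fun k : ℕ => ((k + 1 : ℕ) : ZMod p)) hinj
    (by
      intro i hi h0
      have hi := Finset.mem_range.1 hi
      rw [ZMod.natCast_eq_zero_iff] at h0
      have := Nat.le_of_dvd (by omega) h0
      omega) (by simp)
  rw [h2, Finset.prod_image hinj]
  have h3 : IsPrimitiveRoot (zetaC p) (p - 1 + 1) := by
    rw [hp1]; exact zetaC_prim p hp.ne_zero
  have h4 := h3.prod_one_sub_pow_eq_order
  simp only [auxchi_nat]
  rw [h4]
  exact_mod_cast hp1

lemma aux_key (n p h g : ℕ) [Fact p.Prime] (hn : 0 < n) (hph : p = n * h + 1)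
    (hg : orderOf (g : ZMod p) = p - 1) (hg0 : (g : ZMod p) ≠ 0)
    (F : AddMonoidAlgebra ℤ (ZMod p)) (hF : auxm p ((g : ZMod p) ^ n) F = F) (k : ℕ) :
    auxev p (auxm p ((g : ZMod p) ^ k) F) = ∑ i ∈ Finset.range n,
      ((F.coeff ((g : ZMod p) ^ i) - F.coeff 0 : ℤ) : ℂ) * gaussPeriod n p h g (i + k) := by
  have hc : ∀ r i, F.coeff ((g : ZMod p) ^ (n * r + i)) = F.coeff ((g : ZMod p) ^ i) := by
    intro r i
    induction r with
    | zero => simp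
    | succ r ih =>
      have h3 := auxm_coeff p _ (pow_ne_zero n hg0) F ((g : ZMod p) ^ (n * r + i))
      rw [hF, ← pow_add] at h3
      rw [← ih, ← h3]
      congr 2; ring
  rw [auxev_m]
  have h1 : ∑ a, (F.coeff a : ℂ) * auxchi p ((g : ZMod p) ^ k * a) =
      ∑ a, ((F.coeff a - F.coeff 0 : ℤ) : ℂ) * auxchi p ((g : ZMod p) ^ k * a) := by
    push_cast
    simp only [sub_mul, Finset.sum_sub_distrib, ← Finset.mul_sum]
    rw [auxchi_sum p _ (pow_ne_zero k hg0)]; simp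
  rw [h1, ← Finset.sum_erase Finset.univ (a := (0 : ZMod p)) (by simp),
    aux_gsum n p h g hn hph hg hg0]
  refine Finset.sum_congr rfl fun i _ => ?_
  rw [gaussPeriod, Finset.mul_sum]
  refine Finset.sum_congr rfl fun r _ => ?_
  rw [hc, ← pow_add, ← auxchi_nat]
  push_cast
  congr 3; ring

lemma aux_gp_sum (n p h g : ℕ) [Fact p.Prime] (hn : 0 < n) (hph : p = n * h + 1)
    (hg : orderOf (g : ZMod p) = p - 1) (hg0 : (g : ZMod p) ≠ 0) (k : ℕ) :
    ∑ i ∈ Finset.range n, gaussPeriod n p h g (i + k) = -1 := by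
  have h1 := auxchi_sum p ((g : ZMod p) ^ k) (pow_ne_zero k hg0)
  rw [← Finset.add_sum_erase _ _ (Finset.mem_univ (0 : ZMod p)), aux_gsum n p h g hn hph hg hg0,
    mul_zero, AddChar.map_zero_eq_one] at h1
  rw [eq_neg_iff_add_eq_zero, add_comm, ← h1]
  congr 1
  refine Finset.sum_congr rfl fun i _ => ?_
  rw [gaussPeriod]
  refine Finset.sum_congr rfl fun r _ => ?_
  rw [← pow_add, ← auxchi_nat]
  push_cast
  congr 2; ring

lemma aux_shift {M : Type*} [CommMonoid M] (f : ℕ → M) (h : ℕ) (hf : f h = f 0) :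
    ∏ r ∈ Finset.range h, f (r + 1) = ∏ r ∈ Finset.range h, f r := by
  cases h with
  | zero => simp
  | succ h => rw [Finset.prod_range_succ, hf, Finset.prod_range_succ']

lemma aux_shift_add {M : Type*} [AddCommMonoid M] (f : ℕ → M) (h : ℕ) (hf : f h = f 0) :
    ∑ r ∈ Finset.range h, f (r + 1) = ∑ r ∈ Finset.range h, f r := by
  cases h with
  | zero => simp
  | succ h => rw [Finset.sum_range_succ, hf, Finset.sum_range_succ']

end concrete

section final

open AddMonoidAlgebra

/-- the subring `ℤ[η_0, …, η_{n-1}]` of `Z`. -/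
def auxA (n p h g : ℕ) [Fact p.Prime] : Subring (Zf n p h g) :=
  Subring.comap ((Zf n p h g).val : Zf n p h g →+* ℂ)
    (Subring.map (auxev p) (RingHom.eqLocus (auxm p ((g : ZMod p) ^ n)) (RingHom.id _)))

lemma mem_auxA (n p h g : ℕ) [Fact p.Prime] (x : Zf n p h g) : x ∈ auxA n p h g ↔
    ∃ F, auxm p ((g : ZMod p) ^ n) F = F ∧ auxev p F = (x : ℂ) := Iff.rfl

lemma auxA_pow (n p h g : ℕ) [Fact p.Prime] (hn : 0 < n) (hph : p = n * h + 1)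
    (hg : orderOf (g : ZMod p) = p - 1) (hg0 : (g : ZMod p) ≠ 0)
    (S : Zf n p h g ≃ₐ[ℚ] Zf n p h g)
    (hS : ∀ s : ℕ, (((S ^ s) (etaZ n p h g) : Zf n p h g) : ℂ) = gaussPeriod n p h g s)
    (F : AddMonoidAlgebra ℤ (ZMod p)) (hF : auxm p ((g : ZMod p) ^ n) F = F) :
    ∃ c : ℕ → ℤ, ∃ x : Zf n p h g,
      x = ∑ i ∈ Finset.range n, c i • (S ^ i) (etaZ n p h g) ∧
      (∀ k, (S ^ k) x = ∑ i ∈ Finset.range n, c i • (S ^ (i + k)) (etaZ n p h g)) ∧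
      ∀ k, auxev p (auxm p ((g : ZMod p) ^ k) F) = (((S ^ k) x : Zf n p h g) : ℂ) := by
  have h1 : ∀ (c : ℕ → ℤ) (k : ℕ), (S ^ k) (∑ i ∈ Finset.range n, c i • (S ^ i) (etaZ n p h g)) =
      ∑ i ∈ Finset.range n, c i • (S ^ (i + k)) (etaZ n p h g) := by
    intro c k
    rw [map_sum]
    refine Finset.sum_congr rfl fun i _ => ?_
    rw [map_zsmul, add_comm i k, pow_add]; rfl
  refine ⟨fun i => F.coeff ((g : ZMod p) ^ i) - F.coeff 0, _, rfl, h1 _, fun k => ?_⟩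
  rw [h1, aux_key n p h g hn hph hg hg0 F hF]
  rw [← IntermediateField.coe_val, map_sum]
  refine Finset.sum_congr rfl fun i _ => ?_
  rw [map_zsmul, IntermediateField.coe_val, hS, zsmul_eq_mul]

lemma auxA_data (n p h g : ℕ) [Fact p.Prime] (hn : n.Prime) (hph : p = n * h + 1)
    (hg : orderOf (g : ZMod p) = p - 1)
    (S : Zf n p h g ≃ₐ[ℚ] Zf n p h g)
    (hS : ∀ s : ℕ, (((S ^ s) (etaZ n p h g) : Zf n p h g) : ℂ) = gaussPeriod n p h g s)
    (β : Zf n p h g)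
    (hβ : (β : ℂ) = ∏ r ∈ Finset.range h, (1 - zetaC p ^ (g ^ (n * r)))) :
    AuxData n p S (auxA n p h g) β ∧
    (∀ i, (S ^ i) (etaZ n p h g) ∈ auxA n p h g) ∧
    (∀ x ∈ auxA n p h g, ∃ c : Fin n → ℤ,
      x = ∑ i : Fin n, c i • (S ^ (i : ℕ)) (etaZ n p h g)) := by
  have hp : p.Prime := Fact.out
  have hn0 := hn.pos
  have hgp : (g : ZMod p) ^ (p - 1) = 1 := by rw [← hg]; exact pow_orderOf_eq_one _
  have hg0 : (g : ZMod p) ≠ 0 := by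
    intro h0
    rw [h0, zero_pow (by have := hp.two_le; omega)] at hgp
    exact zero_ne_one hgp
  have hgnh : (g : ZMod p) ^ (n * h) = 1 := by
    have hnh : p - 1 = n * h := by omega
    rw [← hnh]; exact hgp
  have h0 : h ≠ 0 := by
    rintro rfl
    rw [mul_zero, zero_add] at hph
    exact hp.one_lt.ne' hph
  have hpw := auxA_pow n p h g hn0 hph hg hg0 S hS
  have hev : ∀ (F : AddMonoidAlgebra ℤ (ZMod p)), auxm p ((g : ZMod p) ^ n) F = F →
      ∀ x : Zf n p h g, auxev p F = (x : ℂ) →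
      (∃ c : ℕ → ℤ, ∀ k, (S ^ k) x = ∑ i ∈ Finset.range n, c i • (S ^ (i + k)) (etaZ n p h g)) ∧
      ∀ k, auxev p (auxm p ((g : ZMod p) ^ k) F) = (((S ^ k) x : Zf n p h g) : ℂ) := by
    intro F hF x hx
    obtain ⟨c, y, _, hy2, hy3⟩ := hpw F hF
    have hm1 : auxm p 1 F = F := by
      conv_lhs => rw [aux_decomp p F]
      conv_rhs => rw [aux_decomp p F]
      simp [auxm_single]
    have h1 := hy3 0
    rw [pow_zero, hm1, hx, pow_zero] at h1
    have h2 : x = y := Subtype.ext h1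
    subst h2
    exact ⟨⟨c, hy2⟩, hy3⟩
  have heta : ∀ i, (S ^ i) (etaZ n p h g) ∈ auxA n p h g := by
    intro i
    rw [mem_auxA]
    refine ⟨∑ r ∈ Finset.range h, single ((g : ZMod p) ^ (n * r + i)) 1, ?_, ?_⟩
    · rw [map_sum]
      simp only [auxm_single, ← pow_add]
      rw [← aux_shift_add (fun r => (single ((g : ZMod p) ^ (n * r + i)) 1 :
        AddMonoidAlgebra ℤ (ZMod p))) h (by simp [pow_add, hgnh])]
      refine Finset.sum_congr rfl fun r _ => ?_
      congr 2; ring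
    · rw [hS, gaussPeriod, map_sum]
      refine Finset.sum_congr rfl fun r _ => ?_
      rw [auxev_single, ← auxchi_nat]
      push_cast
      simp
  have hgen : ∀ x ∈ auxA n p h g, ∃ c : Fin n → ℤ,
      x = ∑ i : Fin n, c i • (S ^ (i : ℕ)) (etaZ n p h g) := by
    intro x hx
    obtain ⟨F, hF, hx⟩ := (mem_auxA n p h g x).1 hx
    obtain ⟨⟨c, hc⟩, _⟩ := hev F hF x hx
    refine ⟨fun i => c i, ?_⟩
    have := hc 0
    rw [Finset.sum_range] at this
    simpa using this
  -- β
  let Fβ : AddMonoidAlgebra ℤ (ZMod p) :=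
    ∏ r ∈ Finset.range h, (1 - single ((g : ZMod p) ^ (n * r)) 1)
  have hFβm : ∀ k, auxm p ((g : ZMod p) ^ k) Fβ =
      ∏ r ∈ Finset.range h, (1 - single ((g : ZMod p) ^ (n * r + k)) 1) := by
    intro k
    simp only [Fβ, map_prod, map_sub, map_one, auxm_single, ← pow_add]
    exact Finset.prod_congr rfl fun r _ => by rw [add_comm]
  have hFβ : auxm p ((g : ZMod p) ^ n) Fβ = Fβ := by
    rw [hFβm]
    have := aux_shift (fun r => (1 - single ((g : ZMod p) ^ (n * r)) 1 :
        AddMonoidAlgebra ℤ (ZMod p))) h (by simp [hgnh])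
    exact this
  have hevβ : auxev p Fβ = (β : ℂ) := by
    rw [hβ, map_prod]
    refine Finset.prod_congr rfl fun r _ => ?_
    rw [map_sub, map_one, auxev_single, ← auxchi_nat]
    push_cast
    simp
  obtain ⟨-, hβk⟩ := hev Fβ hFβ β hevβ
  -- u
  let Fu : AddMonoidAlgebra ℤ (ZMod p) :=
    ∏ r ∈ Finset.range h, ∑ j ∈ Finset.range g, (single ((g : ZMod p) ^ (n * r)) 1) ^ j
  have hFu : auxm p ((g : ZMod p) ^ n) Fu = Fu := by
    have := aux_shift (fun r => (∑ j ∈ Finset.range g, (single ((g : ZMod p) ^ (n * r)) 1) ^ j :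
        AddMonoidAlgebra ℤ (ZMod p))) h (by simp [hgnh])
    simp only [Fu, map_prod, map_sum, map_pow, auxm_single, ← pow_add]
    rw [← this]
    refine Finset.prod_congr rfl fun r _ => ?_
    rw [show n + n * r = n * (r + 1) by ring]
  have hFm : auxm p ((g : ZMod p) ^ 1) Fβ = Fβ * Fu := by
    rw [hFβm]
    simp only [Fβ, Fu, ← Finset.prod_mul_distrib]
    refine Finset.prod_congr rfl fun r _ => ?_
    rw [mul_neg_geom_sum, single_pow]
    simp [pow_succ, mul_comm]
  obtain ⟨c, u, _, _, hu⟩ := hpw Fu hFu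
  have hm1 : auxm p 1 Fu = Fu := by
    conv_lhs => rw [aux_decomp p Fu]
    conv_rhs => rw [aux_decomp p Fu]
    simp [auxm_single]
  have hu0 : auxev p Fu = (u : ℂ) := by
    have := hu 0
    rwa [pow_zero, hm1, pow_zero] at this
  refine ⟨⟨hn, hp, ?_, ?_, ?_, ?_, ?_, ?_, ?_, ?_⟩, heta, hgen⟩
  · rw [hph]
    have := Nat.le_mul_of_pos_right n (Nat.pos_of_ne_zero h0)
    omega
  · intro x hx
    obtain ⟨F, hF, hx⟩ := (mem_auxA n p h g x).1 hx
    rw [mem_auxA]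
    have := (hev F hF x hx).2 1
    refine ⟨_, ?_, this⟩
    rw [auxm_mul, mul_comm, ← auxm_mul, hF]
  · have h1 : (S ^ n) (etaZ n p h g) = etaZ n p h g := by
      apply Subtype.ext
      rw [hS]
      change _ = gaussPeriod n p h g 0
      rw [gaussPeriod, gaussPeriod]
      simp only [← auxchi_nat]
      have := aux_shift_add (fun r => auxchi p ((g ^ (n * r + 0) : ℕ) : ZMod p)) h (by
        push_cast; simp [hgnh])
      rw [← this]
      refine Finset.sum_congr rfl fun r _ => ?_
      congr 3
    have h2 : ((S ^ n : Zf n p h g ≃ₐ[ℚ] Zf n p h g) : Zf n p h g →ₐ[ℚ] Zf n p h g) =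
        AlgHom.id ℚ _ := by
      apply IntermediateField.algHom_ext_of_eq_adjoin ℚ (S := Zf n p h g) rfl
      intro x hx
      obtain rfl := Set.mem_singleton_iff.1 hx
      exact h1
    ext1 x
    exact DFunLike.congr_fun h2 x
  · intro x hx
    obtain ⟨F, hF, hx⟩ := (mem_auxA n p h g x).1 hx
    obtain ⟨⟨c, hc⟩, _⟩ := hev F hF x hx
    refine ⟨-∑ i ∈ Finset.range n, c i, ?_⟩
    simp only [hc]
    rw [Finset.sum_comm]
    have h1 : ∀ i, ∑ k ∈ Finset.range n, (S ^ (i + k)) (etaZ n p h g) = -1 := by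
      intro i
      apply Subtype.ext
      rw [← IntermediateField.coe_val, map_sum]
      simp only [IntermediateField.coe_val, hS]
      simp only [add_comm i, aux_gp_sum n p h g hn0 hph hg hg0]
      simp
    simp only [← Finset.smul_sum, h1]
    simp
  · exact (mem_auxA n p h g β).2 ⟨Fβ, hFβ, hevβ⟩
  · refine ⟨u, (mem_auxA n p h g u).2 ⟨Fu, hFu, hu0⟩, ?_⟩
    apply Subtype.ext
    have := hβk 1
    rw [hFm, map_mul, hevβ, hu0, pow_one] at this
    exact this.symm
  · apply Subtype.ext
    rw [← IntermediateField.coe_val, map_prod]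
    simp only [IntermediateField.coe_val, ← hβk, hFβm]
    have := aux_gprod n p h g hn0 hph hg hg0 (fun a => 1 - auxchi p a)
    rw [aux_norm] at this
    simp only [map_prod, map_sub, map_one, auxev_single, Int.cast_one, one_mul]
    rw [← this]
    simp
  · exact ⟨fun i => (S ^ (i : ℕ)) (etaZ n p h g), fun i => heta _, hgen⟩

/-- `Dm` as a ring hom -/
def auxD (n p h g : ℕ) (S : Zf n p h g ≃ₐ[ℚ] Zf n p h g) :
    Zf n p h g →+* Matrix (Fin n) (Fin n) (Zf n p h g) where
  toFun := Dm n p h g S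
  map_one' := by simp [Dm]
  map_zero' := by simp [Dm]
  map_mul' x y := by simp [Dm]
  map_add' x y := by simp [Dm]

lemma aux_Upow (n p h g σ : ℕ) (k : ℕ) (hk : k ≤ n) (i j : Fin n) :
    (Um n p h g σ ^ k) i j = if (i : ℕ) = j + k then 1 else
      if (i : ℕ) + n = j + k then (σ : Zf n p h g) else 0 := by
  induction k generalizing i j with
  | zero =>
    have := i.2
    have := j.2
    by_cases hij : i = j
    · subst hij; simp
    · have h1 : (i : ℕ) ≠ j := fun h => hij (Fin.ext h)
      have h2 : (i : ℕ) + n ≠ j := by omega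
      simp [hij, h1, h2]
  | succ k ih =>
    have hi := i.2
    have hj := j.2
    rw [pow_succ', Matrix.mul_apply]
    rcases Nat.eq_zero_or_pos (i : ℕ) with h0 | h0
    · rw [Finset.sum_eq_single (⟨n - 1, by omega⟩ : Fin n)]
      · rw [ih (by omega)]
        have hU : Um n p h g σ i ⟨n - 1, by omega⟩ = (σ : Zf n p h g) := by
          simp only [Um, Matrix.of_apply]
          rw [if_neg (by omega), if_pos (by simp [h0])]
        rw [hU]
        dsimp only
        split_ifs <;> first | omega | (simp; done)
      · intro l _ hl
        have : (l : ℕ) ≠ n - 1 := fun h => hl (Fin.ext h)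
        simp [Um, h0, this]
      · simp
    · rw [Finset.sum_eq_single (⟨i - 1, by omega⟩ : Fin n)]
      · rw [ih (by omega)]
        simp only [Um, Matrix.of_apply]
        split_ifs <;> first | omega | simp
      · intro l _ hl
        have : (l : ℕ) ≠ i - 1 := fun h => hl (Fin.ext h)
        have h2 : (i : ℕ) ≠ l + 1 := by omega
        simp [Um, h0.ne', h2]
      · simp

lemma aux_DU (n p h g σ : ℕ) (hn : 0 < n) (S : Zf n p h g ≃ₐ[ℚ] Zf n p h g) (hSn : S ^ n = 1)
    (z : Zf n p h g) :
    auxD n p h g S z * Um n p h g σ = Um n p h g σ * auxD n p h g S (S z) := by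
  change Dm n p h g S z * _ = _ * Dm n p h g S (S z)
  ext1 i j
  rw [Dm, Dm, Matrix.diagonal_mul, Matrix.mul_diagonal, ← AlgEquiv.mul_apply, ← pow_succ]
  simp only [Um, Matrix.of_apply]
  split_ifs with h1 h2
  · rw [h1]; ring
  · rw [h2.1, h2.2, Nat.sub_add_cancel hn, hSn, pow_zero]; ring
  · simp

end final

/-- The set `I(λ)` of all `ℤ`-linear combinations of the `n²` matrices
`Y^i·D(η_s)` is a subring of `M_n(Z)` containing the identity matrix, and it contains
every `ℤ`-linear combination of the matrices `U^i·D(η_s)` (i.e. `I(λ)` contains the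
order `I` associated with the canonical generation). -/
theorem Iorder_is_subring_containing_order
    (n p h g σ : ℕ) (lam : ℤ)
    (hn : n.Prime) (hnodd : Odd n)
    (hp : p.Prime)
    (hph : p = n * h + 1)
    (hg : orderOf (g : ZMod p) = p - 1)
    (hσfac : ∃ qs : Finset ℕ, 2 ≤ qs.card ∧
      (∀ q ∈ qs, q.Prime ∧ ¬ ∃ x : ZMod p, x ^ n = (q : ZMod p)) ∧ σ = ∏ q ∈ qs, q)
    (hσres : ∃ x : ZMod p, x ^ n = (σ : ZMod p))
    (hσcop : Nat.Coprime σ p)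
    (hlam : (lam : ZMod p) ^ n = (σ : ZMod p))
    (S : Zf n p h g ≃ₐ[ℚ] Zf n p h g)
    (hS : ∀ s : ℕ, (((S ^ s) (etaZ n p h g) : Zf n p h g) : ℂ) = gaussPeriod n p h g s)
    (β : Zf n p h g)
    (hβ : (β : ℂ) = ∏ r ∈ Finset.range h, (1 - zetaC p ^ (g ^ (n * r)))) :
    (∃ R : Subring (Matrix (Fin n) (Fin n) (Zf n p h g)),
      (R : Set (Matrix (Fin n) (Fin n) (Zf n p h g))) = Iorder n p h g σ lam S β) ∧
    (1 : Matrix (Fin n) (Fin n) (Zf n p h g)) ∈ Iorder n p h g σ lam S β ∧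
    (∀ c : Fin n → Fin n → ℤ,
      (∑ i : Fin n, ∑ s : Fin n,
        c i s • (Um n p h g σ ^ (i : ℕ) * Dm n p h g S ((S ^ (s : ℕ)) (etaZ n p h g))))
        ∈ Iorder n p h g σ lam S β) := by
  have : Fact p.Prime := ⟨hp⟩
  obtain ⟨H, heta, hgen⟩ := auxA_data n p h g hn hph hg S hS β hβ
  have hYe : Ym n p h g σ lam S β = (auxD n p h g S lam - Um n p h g σ) *
      auxD n p h g S (β ^ (n - 1) / p) := by
    have e1 : auxD n p h g S lam = (lam : Zf n p h g) • 1 := by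
      change Dm n p h g S lam = _
      ext1 i j
      rw [Dm, Matrix.smul_one_eq_diagonal]
      simp
    have e2 : auxD n p h g S (β ^ (n - 1) / p) =
        (p : Zf n p h g)⁻¹ • Dm n p h g S (β ^ (n - 1)) := by
      change Dm n p h g S _ = _
      rw [Dm, Dm, ← Matrix.diagonal_smul]
      congr 1
      funext i
      rw [map_div₀, map_natCast, Pi.smul_apply, smul_eq_mul]
      ring
    rw [e1, e2, Ym, Matrix.mul_smul]
  have hdvd : (p : ℤ) ∣ lam ^ n - σ := by
    rw [← ZMod.intCast_zmod_eq_zero_iff_dvd]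
    push_cast
    rw [hlam, sub_self]
  have hUn : Um n p h g σ ^ n = auxD n p h g S σ := by
    change _ = Dm n p h g S σ
    ext1 i j
    rw [aux_Upow n p h g σ n le_rfl, Dm]
    have := i.2
    by_cases hij : i = j
    · subst hij
      simp [hn.ne_zero]
    · have h1 : (i : ℕ) ≠ j := fun h => hij (Fin.ext h)
      rw [if_neg (by omega), if_neg (by omega), Matrix.diagonal_apply_ne _ hij]
  obtain ⟨⟨R, hR⟩, hUM⟩ := aux_core H (auxD n p h g S) (Um n p h g σ)
    (aux_DU n p h g σ hn.pos S H.hSn) σ lam hUn hdvd _ hYe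
  have hmem : ∀ x, x ∈ R ↔ x ∈ Iorder n p h g σ lam S β := by
    intro x
    rw [hR]
    constructor
    · intro hx
      induction hx using AddSubgroup.closure_induction with
      | mem x hx =>
        obtain ⟨i, hi, z, hz, rfl⟩ := hx
        obtain ⟨c, rfl⟩ := hgen z hz
        refine ⟨fun i' s => if i' = ⟨i, hi⟩ then c s else 0, ?_⟩
        rw [map_sum, Finset.mul_sum]
        symm
        refine (Finset.sum_eq_single (⟨i, hi⟩ : Fin n) ?_ ?_).trans ?_
        · intro b _ hb
          simp [hb]
        · simp
        · refine Finset.sum_congr rfl fun s _ => ?_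
          beta_reduce
          rw [if_pos rfl, map_zsmul, mul_smul_comm]
          rfl
      | zero => exact ⟨fun _ _ => 0, by simp⟩
      | add x y _ _ h1 h2 =>
        obtain ⟨c, rfl⟩ := h1
        obtain ⟨d, rfl⟩ := h2
        exact ⟨fun i s => c i s + d i s, by simp only [add_zsmul, Finset.sum_add_distrib]⟩
      | neg x _ h1 =>
        obtain ⟨c, rfl⟩ := h1
        exact ⟨fun i s => - c i s, by simp only [neg_zsmul, Finset.sum_neg_distrib]⟩
    · rintro ⟨c, rfl⟩
      refine sum_mem fun i _ => sum_mem fun s _ => zsmul_mem ?_ _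
      exact auxM_basic i.2 (heta s)
  refine ⟨⟨R, Set.ext hmem⟩, (hmem 1).1 R.one_mem, fun c => ?_⟩
  rw [← hmem]
  refine sum_mem fun i _ => sum_mem fun s _ => zsmul_mem ?_ _
  refine R.mul_mem (R.pow_mem ((hR _).2 hUM) _) ((hR _).2 ?_)
  have := auxM_basic (A := auxA n p h g) (D := auxD n p h g S) (Y := Ym n p h g σ lam S β) (k := n)
    (i := 0) hn.pos (heta s)
  rw [pow_zero, one_mul] at this
  exact this

end
end

section
/- The n Gaussian periods η₀, η₁, …, η_{n−1} (the conjugates of η under the Galois group of Z over ℚ) form a ℤ-basis of the ring of integers O_Z of Z, i.e., they form a normal integral basis of Z. -/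
set_option synthInstance.maxHeartbeats 1000000

noncomputable section

section helpers

variable {K : Type*} [Field K] [CharZero K] {p : ℕ} [hp : Fact p.Prime] {ζ : K}

theorem aux_pow_val (hζ : IsPrimitiveRoot ζ p) (k : ℕ) : ζ ^ ((k : ZMod p)).val = ζ ^ k := by
  rw [ZMod.val_natCast, ← pow_mod_orderOf ζ k, ← hζ.eq_orderOf]

theorem aux_li (hζ : IsPrimitiveRoot ζ p) :
    LinearIndependent ℤ (fun u : (ZMod p)ˣ => ζ ^ (u : ZMod p).val) := by
  have h1 := linearIndependent_pow (K := ℚ) ζ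
  have hd : (minpoly ℚ ζ).natDegree = p - 1 := by
    rw [← Polynomial.cyclotomic_eq_minpoly_rat hζ hp.out.pos, Polynomial.natDegree_cyclotomic,
      Nat.totient_prime hp.out]
  have hpos : ∀ u : (ZMod p)ˣ, 0 < (u : ZMod p).val := fun u => by
    rw [Nat.pos_iff_ne_zero, Ne, ZMod.val_eq_zero]
    exact u.ne_zero
  have hlt : ∀ u : (ZMod p)ˣ, (u : ZMod p).val - 1 < (minpoly ℚ ζ).natDegree := fun u => by
    have := ZMod.val_lt (u : ZMod p)
    have := hpos u
    omega
  have h2 := h1.comp (fun u : (ZMod p)ˣ => (⟨(u : ZMod p).val - 1, hlt u⟩ : Fin _)) (by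
    intro u v huv
    have := hpos u
    have := hpos v
    simp only [Fin.mk.injEq] at huv
    apply Units.ext
    apply ZMod.val_injective p
    omega)
  have h0 : ζ ≠ 0 := hζ.ne_zero hp.out.ne_zero
  have h3 := h2.map' (LinearMap.mulLeft ℚ ζ) (by
    rw [LinearMap.ker_eq_bot]
    exact mul_right_injective₀ h0)
  have h4 : LinearIndependent ℚ (fun u : (ZMod p)ˣ => ζ ^ (u : ZMod p).val) := by
    have h5 : (fun u : (ZMod p)ˣ => ζ ^ (u : ZMod p).val) =
        fun u : (ZMod p)ˣ => ζ * ζ ^ ((u : ZMod p).val - 1) := by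
      funext u
      rw [← pow_succ', Nat.sub_add_cancel (hpos u)]
    rw [h5]
    exact h3
  exact h4.restrict_scalars' ℤ

theorem aux_span (hζ : IsPrimitiveRoot ζ p) {x : K} (hx : x ∈ Algebra.adjoin ℤ {ζ}) :
    x ∈ Submodule.span ℤ (Set.range (fun u : (ZMod p)ˣ => ζ ^ (u : ZMod p).val)) := by
  have hnd : ∀ k : ℕ, ¬ p ∣ k →
      ζ ^ k ∈ Submodule.span ℤ (Set.range (fun u : (ZMod p)ˣ => ζ ^ (u : ZMod p).val)) := by
    intro k hk
    have hk' : (k : ZMod p) ≠ 0 := by rwa [Ne, ZMod.natCast_eq_zero_iff]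
    apply Submodule.subset_span
    refine ⟨Units.mk0 _ hk', ?_⟩
    simp only [Units.val_mk0]
    exact aux_pow_val hζ k
  rw [← Subalgebra.mem_toSubmodule, Algebra.adjoin_eq_span] at hx
  refine (Submodule.span_le.2 ?_) hx
  intro y hy
  obtain ⟨k, rfl⟩ := Submonoid.mem_closure_singleton.1 hy
  by_cases hk : p ∣ k
  · have h1 : ζ ^ k = 1 := (hζ.pow_eq_one_iff_dvd k).2 hk
    have h2 := hζ.geom_sum_eq_zero hp.out.one_lt
    obtain ⟨q, hq⟩ : ∃ q, p = q + 1 := ⟨p - 1, by have := hp.out.pos; omega⟩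
    have h3 : ζ ^ k = - ∑ i ∈ Finset.range q, ζ ^ (i + 1) := by
      rw [h1, eq_neg_iff_add_eq_zero, add_comm]
      rw [hq, Finset.sum_range_succ'] at h2
      simpa using h2
    rw [h3]
    refine Submodule.neg_mem _ (Submodule.sum_mem _ fun i hi => hnd _ ?_)
    rw [Finset.mem_range] at hi
    exact fun hd => by
      have := Nat.le_of_dvd (by omega) hd
      omega
  · exact hnd k hk

theorem aux_bij (n h g : ℕ) (hn : 0 < n) (hph : p = n * h + 1) (G : (ZMod p)ˣ)
    (hG : (G : ZMod p) = g) (hg : orderOf (g : ZMod p) = p - 1) :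
    Function.Bijective (fun a : Fin n × Fin h => G ^ (n * (a.2 : ℕ) + a.1)) := by
  have ho : orderOf G = n * h := by
    rw [← orderOf_units, hG, hg, hph]; simp
  rw [Fintype.bijective_iff_injective_and_card]
  constructor
  · rintro ⟨s, r⟩ ⟨s', r'⟩ e
    have hb : ∀ (s : Fin n) (r : Fin h), n * (r : ℕ) + s < orderOf G := by
      intro s r
      rw [ho]
      have h1 : n * ((r : ℕ) + 1) ≤ n * h := Nat.mul_le_mul_left _ r.2
      have := s.2
      rw [mul_add] at h1
      omega
    have e2 := pow_injOn_Iio_orderOf (hb s r) (hb s' r') e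
    have hs : (s : ℕ) = s' := by
      have := congrArg (· % n) e2
      simpa [Nat.mul_add_mod, Nat.mod_eq_of_lt s.2, Nat.mod_eq_of_lt s'.2] using this
    have hr : (r : ℕ) = r' := by
      rw [hs] at e2
      exact Nat.eq_of_mul_eq_mul_left hn (Nat.add_right_cancel e2)
    exact Prod.ext (Fin.ext hs) (Fin.ext hr)
  · rw [Fintype.card_prod, Fintype.card_fin, Fintype.card_fin, ZMod.card_units_eq_totient,
      Nat.totient_prime hp.out, hph]
    simp

theorem aux_regroup (hζ : IsPrimitiveRoot ζ p) (n h g : ℕ) (hn : 0 < n) (hph : p = n * h + 1)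
    (G : (ZMod p)ˣ) (hG : (G : ZMod p) = g) (hg : orderOf (g : ZMod p) = p - 1)
    (d : (ZMod p)ˣ → ℤ) (hd : ∀ u, d (G ^ n * u) = d u) :
    ∑ u : (ZMod p)ˣ, d u • ζ ^ (u : ZMod p).val =
      ∑ s : Fin n, d (G ^ (s : ℕ)) • ∑ r ∈ Finset.range h, ζ ^ (g ^ (n * r + s)) := by
  have hd' : ∀ (r : ℕ) (u), d (G ^ (n * r) * u) = d u := by
    intro r
    induction r with
    | zero => simp
    | succ r ih =>
      intro u
      rw [mul_add, mul_one, pow_add, mul_assoc, ih, hd]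
  rw [← (aux_bij n h g hn hph G hG hg).sum_comp (fun u => d u • ζ ^ (u : ZMod p).val),
    Fintype.sum_prod_type]
  refine Finset.sum_congr rfl fun s _ => ?_
  rw [Finset.smul_sum, Finset.sum_range]
  refine Finset.sum_congr rfl fun r _ => ?_
  simp only
  rw [pow_add, hd', ← pow_add, Units.val_pow_eq_pow_val, hG, ← Nat.cast_pow, aux_pow_val hζ]

theorem aux_li_periods (hζ : IsPrimitiveRoot ζ p) (n h g : ℕ) (hn : 0 < n)
    (hph : p = n * h + 1)
    (G : (ZMod p)ˣ) (hG : (G : ZMod p) = g) (hg : orderOf (g : ZMod p) = p - 1) :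
    LinearIndependent ℤ (fun s : Fin n => ∑ r ∈ Finset.range h, ζ ^ (g ^ (n * r + (s : ℕ)))) := by
  have hh : 0 < h := by
    rcases Nat.eq_zero_or_pos h with rfl | h0
    · exact absurd hph (by simpa using hp.out.ne_one)
    · exact h0
  have h1 := (aux_li hζ).comp _ (aux_bij n h g hn hph G hG hg).injective
  rw [Fintype.linearIndependent_iff] at h1 ⊢
  intro c hc s
  refine h1 (fun a => c a.1) ?_ (s, ⟨0, hh⟩)
  rw [← hc, Fintype.sum_prod_type]
  refine Finset.sum_congr rfl fun s _ => ?_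
  rw [Finset.smul_sum, Finset.sum_range]
  refine Finset.sum_congr rfl fun r _ => ?_
  simp only [Function.comp]
  rw [Units.val_pow_eq_pow_val, hG, ← Nat.cast_pow, aux_pow_val hζ]

theorem aux_fixed (hζ : IsPrimitiveRoot ζ p) (n h g : ℕ) (hn : 0 < n) (hph : p = n * h + 1)
    (G : (ZMod p)ˣ) (hG : (G : ZMod p) = g) (hg : orderOf (g : ZMod p) = p - 1)
    (τ : K →ₐ[ℚ] K) (hτ : τ ζ = ζ ^ (g ^ n)) {y : K} (hy : y ∈ Algebra.adjoin ℤ {ζ})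
    (hτy : τ y = y) :
    ∃ c : Fin n → ℤ, y = ∑ s : Fin n, c s • ∑ r ∈ Finset.range h, ζ ^ (g ^ (n * r + (s : ℕ))) := by
  obtain ⟨d, hd⟩ := (Submodule.mem_span_range_iff_exists_fun ℤ).1 (aux_span hζ hy)
  have h1 : ∀ u : (ZMod p)ˣ,
      τ (ζ ^ (u : ZMod p).val) = ζ ^ ((G ^ n * u : (ZMod p)ˣ) : ZMod p).val := by
    intro u
    rw [map_pow, hτ, ← pow_mul, ← aux_pow_val hζ]
    congr 2
    simp [hG]
  have h2 : τ y = ∑ u : (ZMod p)ˣ, d ((G ^ n)⁻¹ * u) • ζ ^ (u : ZMod p).val := by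
    rw [← hd, map_sum, ← Equiv.sum_comp (Equiv.mulLeft (G ^ n))
      (fun u : (ZMod p)ˣ => d ((G ^ n)⁻¹ * u) • ζ ^ (u : ZMod p).val)]
    refine Finset.sum_congr rfl fun u _ => ?_
    rw [map_zsmul, h1]
    simp
  have h3 : ∀ u, d ((G ^ n)⁻¹ * u) = d u := by
    have h4 := Fintype.linearIndependent_iff.1 (aux_li hζ) (fun u => d ((G ^ n)⁻¹ * u) - d u) (by
      simp only [sub_smul, Finset.sum_sub_distrib]
      rw [← h2, hd, hτy, sub_self])
    exact fun u => sub_eq_zero.1 (h4 u)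
  refine ⟨fun s => d (G ^ (s : ℕ)), ?_⟩
  rw [← hd]
  refine aux_regroup hζ n h g hn hph G hG hg d fun u => ?_
  rw [← h3 (G ^ n * u), inv_mul_cancel_left]

theorem aux_tau [IsCyclotomicExtension {p} ℚ K] (hζ : IsPrimitiveRoot ζ p) (m : ℕ)
    (hm : m.Coprime p) : ∃ τ : K →ₐ[ℚ] K, τ ζ = ζ ^ m := by
  have h2 := hζ.pow_of_coprime m hm
  refine ⟨(hζ.powerBasis ℚ).lift (ζ ^ m) ?_, ?_⟩
  · rw [IsPrimitiveRoot.powerBasis_gen, ← Polynomial.cyclotomic_eq_minpoly_rat hζ hp.out.pos,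
      Polynomial.cyclotomic_eq_minpoly_rat h2 hp.out.pos, minpoly.aeval]
  · have := (hζ.powerBasis ℚ).lift_gen (ζ ^ m) (by
      rw [IsPrimitiveRoot.powerBasis_gen, ← Polynomial.cyclotomic_eq_minpoly_rat hζ hp.out.pos,
        Polynomial.cyclotomic_eq_minpoly_rat h2 hp.out.pos, minpoly.aeval])
    conv_lhs at this => arg 2; rw [IsPrimitiveRoot.powerBasis_gen]
    exact this

end helpers

/-- Every integral element of `Z` is an integral combination of periods. -/
theorem aux_main (n p h g : ℕ) (hn : 0 < n) [hp : Fact p.Prime] (hph : p = n * h + 1)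
    (G : (ZMod p)ˣ) (hG : (G : ZMod p) = g) (hg : orderOf (g : ZMod p) = p - 1)
    (hζ : IsPrimitiveRoot (zetaC p) p) (x : ℂ) (hx : x ∈ Zf n p h g) (hxi : IsIntegral ℤ x) :
    ∃ c : Fin n → ℤ, x = ∑ s : Fin n, c s • gaussPeriod n p h g s := by
  have hpos := hp.out.pos
  have : NeZero p := ⟨hp.out.ne_zero⟩
  let L : IntermediateField ℚ ℂ := IntermediateField.adjoin ℚ {zetaC p}
  have hcyc : IsCyclotomicExtension {p} ℚ L := by
    change IsCyclotomicExtension {p} ℚ L.toSubalgebra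
    have hal : IsAlgebraic ℚ (zetaC p) := (hζ.isIntegral hpos).tower_top.isAlgebraic
    rw [IntermediateField.adjoin_simple_toSubalgebra_of_isAlgebraic hal]
    exact hζ.adjoin_isCyclotomicExtension ℚ
  have hmem : zetaC p ∈ L := IntermediateField.mem_adjoin_simple_self ℚ _
  let z : L := ⟨zetaC p, hmem⟩
  have hz : IsPrimitiveRoot z p := by
    refine IsPrimitiveRoot.of_map_of_injective (f := L.val) ?_ L.val.injective
    exact hζ
  have hcop : (g ^ n).Coprime p := by
    have := ZMod.val_coe_unit_coprime (G ^ n)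
    rw [Units.val_pow_eq_pow_val, hG, ← Nat.cast_pow, ZMod.val_natCast] at this
    rw [Nat.Coprime, Nat.gcd_comm, Nat.gcd_rec]
    exact this
  obtain ⟨τ, hτ⟩ := aux_tau hz (g ^ n) hcop
  let e : L := ∑ r ∈ Finset.range h, z ^ (g ^ (n * r + 0))
  have he : (e : ℂ) = gaussPeriod n p h g 0 := by
    simp [e, gaussPeriod, z]
  have hτe : τ e = e := by
    have hg1 : z ^ (g ^ (n * h)) = z ^ (g ^ (n * 0)) := by
      rw [← aux_pow_val hz, ← aux_pow_val hz (g ^ (n * 0))]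
      have : (g : ZMod p) ^ (n * h) = 1 := by
        have := pow_orderOf_eq_one (g : ZMod p)
        rwa [hg, show p - 1 = n * h by omega] at this
      simp [this]
    have h1 := Finset.sum_range_succ (fun r => z ^ (g ^ (n * r))) h
    have h2 := Finset.sum_range_succ' (fun r => z ^ (g ^ (n * r))) h
    have h3 : τ e = ∑ r ∈ Finset.range h, z ^ (g ^ (n * (r + 1))) := by
      simp only [e, map_sum, map_pow, hτ, add_zero]
      refine Finset.sum_congr rfl fun r _ => ?_
      rw [← pow_mul, ← pow_add, mul_add, mul_one, add_comm]
    rw [h1, hg1] at h2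
    rw [h3]
    simpa [e] using (add_right_cancel h2).symm
  have hfix : ∃ y : L, (y : ℂ) = x ∧ τ y = y := by
    refine IntermediateField.adjoin_induction ℚ
      (p := fun x _ => ∃ y : L, (y : ℂ) = x ∧ τ y = y) ?_ ?_ ?_ ?_ ?_ hx
    · rintro x hx
      rw [Set.mem_singleton_iff] at hx
      exact ⟨e, by rw [he, hx], hτe⟩
    · intro q
      exact ⟨algebraMap ℚ L q, rfl, τ.commutes q⟩
    · rintro _ _ _ _ ⟨a, rfl, ha⟩ ⟨b, rfl, hb⟩
      exact ⟨a + b, rfl, by rw [map_add, ha, hb]⟩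
    · rintro _ _ ⟨a, rfl, ha⟩
      exact ⟨a⁻¹, rfl, by rw [map_inv₀, ha]⟩
    · rintro _ _ _ _ ⟨a, rfl, ha⟩ ⟨b, rfl, hb⟩
      exact ⟨a * b, rfl, by rw [map_mul, ha, hb]⟩
  obtain ⟨y, rfl, hy⟩ := hfix
  have hyi : IsIntegral ℤ y :=
    (isIntegral_algHom_iff (L.val.restrictScalars ℤ) L.val.injective).1 hxi
  have hcl := IsCyclotomicExtension.Rat.isIntegralClosure_adjoin_singleton_of_prime hz
  obtain ⟨w, hw⟩ := hcl.isIntegral_iff.1 hyi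
  have hya : y ∈ Algebra.adjoin ℤ {z} := by
    rw [← hw]
    exact w.2
  obtain ⟨c, hc⟩ := aux_fixed hz n h g hn hph G hG hg τ hτ hya hy
  refine ⟨c, ?_⟩
  have := congrArg (L.val) hc
  rw [map_sum] at this
  refine this.trans (Finset.sum_congr rfl fun s _ => ?_)
  rw [map_zsmul, map_sum]
  congr 1

/-- The `n` Gaussian periods `η₀, …, η_{n-1}` (the conjugates of `η`
under the Galois group of `Z` over `ℚ`) form a `ℤ`-basis of the ring of integers `O_Z`
of `Z`, i.e. a normal integral basis. -/
theorem gauss_periods_normal_integral_basis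
    (n p h g : ℕ)
    (hn : 2 ≤ n)
    (hp : p.Prime)
    (hph : p = n * h + 1)
    (hg : orderOf (g : ZMod p) = p - 1)
    (S : Zf n p h g ≃ₐ[ℚ] Zf n p h g)
    (hS : ∀ s : ℕ, (((S ^ s) (etaZ n p h g) : Zf n p h g) : ℂ) = gaussPeriod n p h g s) :
    ∃ b : Module.Basis (Fin n) ℤ (integralClosure ℤ (Zf n p h g)),
      ∀ s : Fin n, (b s : Zf n p h g) = (S ^ (s : ℕ)) (etaZ n p h g) := by
  have hpf : Fact p.Prime := ⟨hp⟩
  have hζ : IsPrimitiveRoot (zetaC p) p := Complex.isPrimitiveRoot_exp p hp.ne_zero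
  have hg0 : (g : ZMod p) ≠ 0 := by
    intro h0
    have h1 := pow_orderOf_eq_one (g : ZMod p)
    have h2 := hp.two_le
    rw [hg, h0, zero_pow (by omega)] at h1
    exact zero_ne_one h1
  have hn0 : 0 < n := by omega
  have hG : ((Units.mk0 _ hg0 : (ZMod p)ˣ) : ZMod p) = g := rfl
  let φ : Zf n p h g →ₐ[ℤ] ℂ := (Zf n p h g).val.restrictScalars ℤ
  have hφ : Function.Injective φ := (Zf n p h g).val.injective
  have hint : ∀ s : ℕ, IsIntegral ℤ ((S ^ s) (etaZ n p h g)) := by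
    intro s
    refine (isIntegral_algHom_iff φ hφ).1 ?_
    have : φ ((S ^ s) (etaZ n p h g)) = gaussPeriod n p h g s := hS s
    rw [this]
    exact IsIntegral.sum _ fun r _ => (hζ.isIntegral hp.pos).pow _
  let v : Fin n → integralClosure ℤ (Zf n p h g) :=
    fun s => ⟨(S ^ (s : ℕ)) (etaZ n p h g), hint s⟩
  let ψ : integralClosure ℤ (Zf n p h g) →ₐ[ℤ] ℂ := φ.comp (integralClosure ℤ (Zf n p h g)).val
  have hψ : Function.Injective ψ := hφ.comp Subtype.val_injective
  have hv : ∀ s, ψ (v s) = gaussPeriod n p h g s := fun s => hS s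
  have hli : LinearIndependent ℤ v := by
    refine LinearIndependent.of_comp ψ.toLinearMap ?_
    have h1 := aux_li_periods hζ n h g hn0 hph _ hG hg
    have h2 : ψ.toLinearMap ∘ v = fun s : Fin n => gaussPeriod n p h g s := funext hv
    rw [h2]
    exact h1
  have hsp : ⊤ ≤ Submodule.span ℤ (Set.range v) := by
    intro x _
    obtain ⟨c, hc⟩ := aux_main n p h g hn0 hph _ hG hg hζ (ψ x) x.1.2
      ((isIntegral_algHom_iff φ hφ).2 x.2)
    refine (Submodule.mem_span_range_iff_exists_fun ℤ).2 ⟨c, hψ ?_⟩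
    rw [hc, map_sum]
    refine Finset.sum_congr rfl fun s _ => ?_
    rw [map_zsmul, hv]
  refine ⟨Module.Basis.mk hli hsp, fun s => ?_⟩
  rw [Module.Basis.mk_apply]

end
end

section
/- Let p be a prime with p ≡ 1 (mod 3) and let η₀, η₁, η₂ be the Gaussian periods of order 3 for a primitive root g modulo p. Then there exist integers r and d with 4p = r² + 27d² and r ≡ 1 (mod 3), and the period polynomial satisfies ∏_{s=0}^{2}(X − η_s) = X³ + X² − ((p−1)/3)·X − ((r+3)p − 1)/27; in particular this cubic with rational coefficients is the minimal polynomial of η₀ over ℚ. -/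
noncomputable section

open Polynomial

lemma aux_adjoin {w z : ℂ} (hw : w ^ 2 + w + 1 = 0) (hz : z ∈ Algebra.adjoin ℤ {w}) :
    ∃ m n : ℤ, z = m + n * w := by
  induction hz using Algebra.adjoin_induction with
  | mem x hx =>
    rw [Set.mem_singleton_iff] at hx
    exact ⟨0, 1, by simp [hx]⟩
  | algebraMap k => exact ⟨k, 0, by simp⟩
  | add x y _ _ hx hy =>
    obtain ⟨a, b, rfl⟩ := hx
    obtain ⟨c, d, rfl⟩ := hy
    exact ⟨a + c, b + d, by push_cast; ring⟩
  | mul x y _ _ hx hy =>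
    obtain ⟨a, b, rfl⟩ := hx
    obtain ⟨c, d, rfl⟩ := hy
    refine ⟨a * c - b * d, a * d + b * c - b * d, ?_⟩
    push_cast
    linear_combination (b * d : ℂ) * hw

lemma aux_sum_three (f : ℕ → ℂ) (h : ℕ) :
    ∑ k ∈ Finset.range (3 * h), f k =
      ∑ r ∈ Finset.range h, (f (3 * r) + f (3 * r + 1) + f (3 * r + 2)) := by
  induction h with
  | zero => simp
  | succ n ih =>
    rw [Finset.sum_range_succ, ← ih, show 3 * (n + 1) = 3 * n + 1 + 1 + 1 by ring,
      Finset.sum_range_succ, Finset.sum_range_succ, Finset.sum_range_succ]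
    ring

lemma aux_sum_pow {p g : ℕ} [Fact p.Prime] (hg : orderOf (g : ZMod p) = p - 1)
    (F : ZMod p → ℂ) (hF : F 0 = 0) :
    ∑ a, F a = ∑ k ∈ Finset.range (p - 1), F ((g : ZMod p) ^ k) := by
  classical
  have hp1 : 0 < p - 1 := by have := (Fact.out : p.Prime).two_le; omega
  have hg0 : (g : ZMod p) ≠ 0 := by
    intro h0
    rw [h0] at hg
    have := orderOf_pos_iff.1 (by rw [hg]; exact hp1 : 0 < orderOf (0 : ZMod p))
    have h2 := pow_orderOf_eq_one (0 : ZMod p)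
    rw [hg, zero_pow hp1.ne'] at h2
    exact zero_ne_one h2
  have hinj : Set.InjOn (fun k : ℕ => (g : ZMod p) ^ k) (Finset.range (p - 1) : Set ℕ) := by
    have := pow_injOn_Iio_orderOf (x := (g : ZMod p))
    rw [hg] at this
    intro a ha b hb hab
    exact this (by simpa using ha) (by simpa using hb) hab
  have him : (Finset.range (p - 1)).image (fun k : ℕ => (g : ZMod p) ^ k)
      = Finset.univ.erase 0 := by
    apply Finset.eq_of_subset_of_card_le
    · intro x hx
      obtain ⟨k, _, rfl⟩ := Finset.mem_image.1 hx
      simp [hg0]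
    · rw [Finset.card_image_of_injOn hinj, Finset.card_erase_of_mem (Finset.mem_univ _)]
      simp [ZMod.card]
  rw [← Finset.sum_erase _ hF, ← him, Finset.sum_image hinj]

lemma aux_gauss {p h g : ℕ} [Fact p.Prime] (hph : p = 3 * h + 1)
    (hg : orderOf (g : ZMod p) = p - 1) (hz : zetaC p ^ p = 1)
    (χ : MulChar (ZMod p) ℂ) (w : ℂ) (hχ : χ (g : ZMod p) = w) (hw : w ^ 3 = 1) :
    gaussSum χ (AddChar.zmodChar p hz) = gaussPeriod 3 p h g 0 + w * gaussPeriod 3 p h g 1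
      + w ^ 2 * gaussPeriod 3 p h g 2 := by
  have h1 := aux_sum_pow hg (fun a => χ a * AddChar.zmodChar p hz a) (by simp [MulChar.map_zero])
  rw [gaussSum, h1, show p - 1 = 3 * h by omega, aux_sum_three]
  have h2 : ∀ k : ℕ, χ ((g : ZMod p) ^ k) * AddChar.zmodChar p hz ((g : ZMod p) ^ k)
      = w ^ k * zetaC p ^ (g ^ k) := by
    intro k
    rw [map_pow, hχ, ← Nat.cast_pow, AddChar.zmodChar_apply']
  simp only [h2, gaussPeriod, Finset.mul_sum, ← Finset.sum_add_distrib]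
  refine Finset.sum_congr rfl fun r _ => ?_
  simp only [pow_add w, pow_mul w, hw, one_pow, add_zero]
  ring

lemma aux_char {p h g : ℕ} [Fact p.Prime] (hph : p = 3 * h + 1)
    (hg : orderOf (g : ZMod p) = p - 1) (w : ℂ) (hw : w ^ 3 = 1) :
    ∃ χ : MulChar (ZMod p) ℂ, χ (g : ZMod p) = w ∧ χ ^ 3 = 1 := by
  classical
  have hp1 : 0 < p - 1 := by have := (Fact.out : p.Prime).two_le; omega
  have hg0 : (g : ZMod p) ≠ 0 := by
    intro h0
    rw [h0] at hg
    have h2 := pow_orderOf_eq_one (0 : ZMod p)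
    rw [hg, zero_pow hp1.ne'] at h2
    exact zero_ne_one h2
  let u : (ZMod p)ˣ := Units.mk0 _ hg0
  have hu : orderOf u = p - 1 := by rw [← hg, ← orderOf_units]; rfl
  have hgen : ∀ x, x ∈ Subgroup.zpowers u := by
    have : Nat.card (Subgroup.zpowers u) = Nat.card (ZMod p)ˣ := by
      rw [Nat.card_zpowers, hu, Nat.card_eq_fintype_card, ZMod.card_units]
    have h3 := Subgroup.eq_top_of_card_eq _ this
    intro x
    rw [h3]; trivial
  let v : ℂˣ := Units.mk0 w (by rintro rfl; norm_num at hw)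
  have hv3 : v ^ 3 = 1 := by ext; simpa [v] using hw
  have hv : v ∈ rootsOfUnity (Fintype.card (ZMod p)ˣ) ℂ := by
    rw [mem_rootsOfUnity, ZMod.card_units, show p - 1 = 3 * h by omega, pow_mul, hv3, one_pow]
  have hs := MulChar.ofRootOfUnity_spec hv hgen
  refine ⟨MulChar.ofRootOfUnity hv hgen, hs, ?_⟩
  rw [MulChar.eq_iff hgen, MulChar.pow_apply_coe, hs, MulChar.one_apply_coe]
  exact hw

lemma aux_irr {p : ℕ} {r d : ℤ} (hp : p.Prime) (h7 : 7 ≤ p)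
    (hr : 4 * (p : ℤ) = r ^ 2 + 27 * d ^ 2) (hr3 : r % 3 = 1) :
    Irreducible (X ^ 3 + X ^ 2 - C (((p : ℚ) - 1) / 3) * X -
          C ((((r : ℚ) + 3) * (p : ℚ) - 1) / 27)) := by
  have hdeg : (X ^ 3 + X ^ 2 - C (((p : ℚ) - 1) / 3) * X -
          C ((((r : ℚ) + 3) * (p : ℚ) - 1) / 27)).natDegree = 3 := by compute_degree!
  apply irreducible_of_degree_le_three_of_not_isRoot
  · rw [hdeg]; decide
  intro x hx
  simp only [IsRoot.def, eval_sub, eval_add, eval_pow, eval_X, eval_mul, eval_C] at hx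
  have hy : (3 * x + 1) ^ 3 - 3 * p * (3 * x + 1) - p * r = 0 := by
    linear_combination 27 * hx
  obtain ⟨y, hyx, -⟩ := exists_integer_of_is_root_of_monic (A := ℤ) (K := ℚ)
    (p := X ^ 3 - C (3 * (p : ℤ)) * X - C (p * r)) (r := 3 * x + 1) (by monicity!)
    (by
      simp only [map_sub, map_mul (aeval _), map_pow, aeval_X, aeval_C]
      simp only [algebraMap_int_eq, eq_intCast]
      push_cast
      exact hy)
  rw [hyx] at hy
  have hy' : y ^ 3 - 3 * p * y - p * r = 0 := by
    simp only [algebraMap_int_eq, eq_intCast] at hy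
    exact_mod_cast hy
  have hpZ : Prime (p : ℤ) := Nat.prime_iff_prime_int.1 hp
  have hpy : (p : ℤ) ∣ y := hpZ.dvd_of_dvd_pow (n := 3) ⟨3 * y + r, by linear_combination hy'⟩
  obtain ⟨k, rfl⟩ := hpy
  have hp0 : (p : ℤ) ≠ 0 := hpZ.ne_zero
  have hk : r = p * (p * k ^ 3 - 3 * k) := by
    apply mul_left_cancel₀ hp0
    linear_combination -hy'
  generalize (p * k ^ 3 - 3 * k : ℤ) = t at hk
  have ht : t ≠ 0 := by
    rintro rfl
    simp [hk] at hr3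
  have ht2 : 1 ≤ t ^ 2 := by
    have : 0 < t ^ 2 := by positivity
    omega
  have h7' : (7 : ℤ) ≤ p := by exact_mod_cast h7
  rw [hk] at hr
  nlinarith [sq_nonneg d, mul_le_mul_of_nonneg_left ht2 (sq_nonneg (p : ℤ))]

/-- For a prime `p ≡ 1 (mod 3)`, there exist integers `r`, `d` with
`4p = r² + 27d²` and `r ≡ 1 (mod 3)` such that the period polynomial of degree 3 is
`∏_{s=0}^{2}(X − η_s) = X³ + X² − ((p−1)/3)·X − ((r+3)p − 1)/27`; in particular this
cubic is the minimal polynomial of `η₀` over `ℚ`. -/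
theorem period_polynomial_degree_three
    (p h g : ℕ)
    (hp : p.Prime)
    (hph : p = 3 * h + 1)
    (hg : orderOf (g : ZMod p) = p - 1) :
    ∃ r d : ℤ, 4 * (p : ℤ) = r ^ 2 + 27 * d ^ 2 ∧ r % 3 = 1 ∧
      (∏ s ∈ Finset.range 3, (X - C (gaussPeriod 3 p h g s))) =
        X ^ 3 + X ^ 2 - C (((p : ℂ) - 1) / 3) * X -
          C ((((r : ℂ) + 3) * (p : ℂ) - 1) / 27) ∧
      minpoly ℚ (gaussPeriod 3 p h g 0) =
        X ^ 3 + X ^ 2 - C (((p : ℚ) - 1) / 3) * X -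
          C ((((r : ℚ) + 3) * (p : ℚ) - 1) / 27) := by
  have : Fact p.Prime := ⟨hp⟩
  have h7 : 7 ≤ p := by
    have := hp.two_le
    by_contra hlt
    have : h = 1 := by omega
    subst this
    subst hph
    norm_num at hp
  have hζ : IsPrimitiveRoot (zetaC p) p := Complex.isPrimitiveRoot_exp p hp.ne_zero
  have hz := hζ.pow_eq_one
  obtain ⟨w, hw⟩ : ∃ w : ℂ, IsPrimitiveRoot w 3 := ⟨_, Complex.isPrimitiveRoot_exp 3 (by norm_num)⟩
  have hw3 := hw.pow_eq_one
  have hw1 : w ≠ 1 := hw.ne_one (by norm_num)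
  have hw2 : w ^ 2 + w + 1 = 0 := by
    apply mul_left_cancel₀ (sub_ne_zero.2 hw1)
    linear_combination hw3
  have hconj : (starRingEnd ℂ) w = w ^ 2 := by
    have hn : ‖w‖ = 1 := hw.norm'_eq_one (by norm_num)
    have h1 : w * (starRingEnd ℂ) w = 1 := by
      rw [Complex.mul_conj, Complex.normSq_eq_norm_sq, hn]; norm_num
    linear_combination w ^ 2 * h1 - (starRingEnd ℂ) w * hw3
  obtain ⟨χ, hχ, hχ3⟩ := aux_char hph hg w hw3
  have hχ1 : χ ≠ 1 := by
    rintro rfl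
    have hu : IsUnit (g : ZMod p) := by
      by_contra hu
      rw [MulChar.map_nonunit _ hu] at hχ
      rw [← hχ] at hw3
      norm_num at hw3
    rw [MulChar.one_apply hu] at hχ
    exact hw1 hχ.symm
  have hχinv : χ⁻¹ = χ ^ 2 := by
    rw [inv_eq_iff_mul_eq_one, ← pow_succ']; exact hχ3
  have hχχ : χ * χ ≠ 1 := by
    intro h
    rw [← pow_two, ← hχinv, inv_eq_one] at h
    exact hχ1 h
  have hord : orderOf χ = 3 := orderOf_eq_prime hχ3 hχ1
  have hordi : orderOf χ⁻¹ = 3 := by rw [orderOf_inv, hord]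
  have hneg : ∀ φ : MulChar (ZMod p) ℂ, φ ^ 3 = 1 → φ (-1) = 1 := by
    intro φ hφ
    have : φ (-1) ^ 3 = 1 := by
      rw [← MulChar.pow_apply' _ (by norm_num), hφ, MulChar.one_apply (by simp)]
    rw [← map_pow] at this
    rwa [show (-1 : ZMod p) ^ 3 = -1 by ring] at this
  have hψ := AddChar.zmodChar_primitive_of_primitive_root p hζ
  have hψ1 : AddChar.zmodChar p hz ≠ 1 := by
    intro h
    have h1 := DFunLike.congr_fun h ((1 : ℕ) : ZMod p)
    rw [AddChar.zmodChar_apply'] at h1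
    simp at h1
    exact hζ.ne_one (by omega) h1
  have hχi : χ⁻¹ (g : ZMod p) = w ^ 2 := by
    rw [hχinv, MulChar.pow_apply' _ (by norm_num), hχ]
  have hG0 := aux_gauss hph hg hz 1 1 (by
    rw [MulChar.one_apply]
    by_contra hu
    rw [MulChar.map_nonunit _ hu] at hχ
    rw [← hχ] at hw3
    norm_num at hw3) (by norm_num)
  have hG1 := aux_gauss hph hg hz χ w hχ hw3
  have hG2 := aux_gauss hph hg hz χ⁻¹ (w ^ 2) hχi (by rw [← pow_mul, mul_comm, pow_mul, hw3, one_pow])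
  rw [gaussSum_one_left hψ1] at hG0
  have hGG : gaussSum χ (AddChar.zmodChar p hz) * gaussSum χ⁻¹ (AddChar.zmodChar p hz) = p := by
    have h1 := gaussSum_mul_gaussSum_eq_card hχ1 hψ
    have h2 := mul_gaussSum_inv_eq_gaussSum χ⁻¹ (AddChar.zmodChar p hz)
    rw [hneg _ (by rw [inv_pow, hχ3, inv_one]), one_mul] at h2
    rw [h2, ZMod.card] at h1
    exact h1
  have hC : ∀ φ : MulChar (ZMod p) ℂ, orderOf φ = 3 → gaussSum φ (AddChar.zmodChar p hz) ^ 3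
      = p * jacobiSum φ φ := by
    intro φ hφ
    have h1 := gaussSum_pow_eq_prod_jacobiSum (χ := φ) (by rw [hφ]; norm_num) hψ
    rw [hφ, hneg _ (by rw [← hφ, pow_orderOf_eq_one]), ZMod.card, one_mul] at h1
    simpa using h1
  have hC1 := hC χ hord
  have hC2 := hC χ⁻¹ hordi
  have hJJ : jacobiSum χ χ * jacobiSum χ⁻¹ χ⁻¹ = p := by
    have := jacobiSum_mul_jacobiSum_inv (F := ZMod p) (F' := ℂ) (by
      rw [ringChar.eq_zero, ZMod.ringChar_zmod_n]; exact hp.ne_zero.symm) hχ1 hχ1 hχχ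
    rwa [ZMod.card] at this
  have hJi : jacobiSum χ⁻¹ χ⁻¹ = (starRingEnd ℂ) (jacobiSum χ χ) := by
    have : χ⁻¹ = χ.ringHomComp (starRingEnd ℂ) := by
      ext a
      rw [← MulChar.star_apply']
      rfl
    rw [this, jacobiSum_ringHomComp]
  obtain ⟨z, hzm, hJ⟩ := exists_jacobiSum_eq_neg_one_add (n := 3) (by norm_num) hχ3 hχ3
    (by rw [ZMod.card]; exact ⟨h, by omega⟩) hw
  obtain ⟨m, n, rfl⟩ := aux_adjoin hw2 hzm
  rw [hJi] at hJJ hC2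
  rw [hJ] at hJJ hC1 hC2
  simp only [map_add, map_mul, map_neg, map_one, map_pow, map_sub, hconj, map_intCast] at hJJ hC2
  generalize gaussSum χ (AddChar.zmodChar p hz) = G at *
  generalize gaussSum χ⁻¹ (AddChar.zmodChar p hz) = G' at *
  set a := gaussPeriod 3 p h g 0
  set b := gaussPeriod 3 p h g 1
  set c := gaussPeriod 3 p h g 2
  -- J = -1 + 3 n + (3 n - 3 m) w
  have hJe : -1 + ((m : ℂ) + n * w) * (w - 1) ^ 2 = (3 * n - 1) + (3 * n - 3 * m) * w := by
    linear_combination ((m : ℂ) + n * w - 3 * n) * hw2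
  have hJe' : -1 + ((m : ℂ) + n * w ^ 2) * (w ^ 2 - 1) ^ 2
      = (3 * n - 1) + (3 * n - 3 * m) * w ^ 2 := by
    linear_combination ((m : ℂ) + n * w ^ 2 - 3 * n) * (w ^ 2 - w + 1) * hw2
  rw [hJe] at hC1 hJJ
  rw [hJe'] at hC2 hJJ
  have hrp : 4 * (p : ℤ) = (3 * m + 3 * n - 2) ^ 2 + 27 * (n - m) ^ 2 := by
    have : 4 * (p : ℂ) = (3 * m + 3 * n - 2) ^ 2 + 27 * (n - m) ^ 2 := by
      rw [← hJJ]
      linear_combination (4 * (3 * n - 1) * (3 * n - 3 * m)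
        + 4 * (3 * n - 3 * m) ^ 2 * (w - 1) : ℂ) * hw2
    exact_mod_cast this
  have hr3 : (3 * m + 3 * n - 2) % 3 = 1 := by omega
  have e1 : a + b + c = -1 := by linear_combination -hG0
  have hN : a ^ 2 + b ^ 2 + c ^ 2 - a * b - b * c - c * a = p := by
    rw [hG1, hG2] at hGG
    linear_combination hGG - (b ^ 2 * (w - 1) + c ^ 2 * (w - 1) * (w ^ 3 + 1) + a * b
      + a * c * (w ^ 2 - w + 1) + b * c * (w ^ 3 - w + 1)) * hw2
  have ha : 3 * a = G + G' - 1 := by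
    rw [hG1, hG2]
    linear_combination e1 - (b + c * (w ^ 2 - w + 1)) * hw2
  have hb : 3 * b = w ^ 2 * G + w * G' - 1 := by
    rw [hG1, hG2]
    linear_combination e1 - (a + 2 * b * (w - 1) + c * (w ^ 3 - w + 1)) * hw2
  have hc : 3 * c = w * G + w ^ 2 * G' - 1 := by
    rw [hG1, hG2]
    linear_combination e1 - (a + b * (w ^ 2 - w + 1)
      + c * ((w - 1) + (w - 1) * (w ^ 3 + 1))) * hw2
  have hbc : (3 * b) * (3 * c) = G ^ 2 + G' ^ 2 - G * G' + G + G' + 1 := by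
    rw [hb, hc]
    linear_combination ((w - 1) * (G ^ 2 + G' ^ 2) + (w ^ 2 - w + 1) * (G * G') - G - G') * hw2
  have habc : 27 * (a * b * c) = G ^ 3 + G' ^ 3 + 3 * (G * G') - 1 := by
    linear_combination (3 * b) * (3 * c) * ha + (G + G' - 1) * hbc
  rw [hC1, hC2, hGG] at habc
  have e2 : a * b + b * c + c * a = -(((p : ℂ) - 1) / 3) := by
    linear_combination (a + b + c - 1) / 3 * e1 - 1 / 3 * hN
  have e3 : a * b * c = (((3 * m + 3 * n - 2 : ℤ) : ℂ) + 3) * p / 27 - 1 / 27 := by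
    push_cast
    linear_combination habc / 27 + (p : ℂ) * (3 * n - 3 * m) / 27 * hw2
  have hprod : (∏ s ∈ Finset.range 3, (X - C (gaussPeriod 3 p h g s))) =
        X ^ 3 + X ^ 2 - C (((p : ℂ) - 1) / 3) * X -
          C (((((3 * m + 3 * n - 2 : ℤ) : ℂ) + 3) * (p : ℂ) - 1) / 27) := by
    have e3' : a * b * c = ((((3 * m + 3 * n - 2 : ℤ) : ℂ) + 3) * p - 1) / 27 := by
      rw [e3]; ring
    have E1 := congrArg (C : ℂ → ℂ[X]) e1
    have E2 := congrArg (C : ℂ → ℂ[X]) e2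
    have E3 := congrArg (C : ℂ → ℂ[X]) e3'
    simp only [C_add, C_mul, C_neg, C_1] at E1 E2
    rw [← E3]
    simp only [Finset.prod_range_succ, Finset.prod_range_zero, C_mul]
    change 1 * (X - C a) * (X - C b) * (X - C c) = _
    linear_combination (-X ^ 2) * E1 + X * E2
  refine ⟨3 * m + 3 * n - 2, n - m, hrp, hr3, hprod, ?_⟩
  symm
  apply minpoly.eq_of_irreducible_of_monic (aux_irr hp h7 hrp hr3)
  · have := congrArg (eval a) hprod
    simp only [Finset.prod_range_succ, Finset.prod_range_zero, eval_mul, eval_sub, eval_X, eval_C,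
      eval_add, eval_pow] at this
    simp only [map_sub, map_add, map_mul, map_pow, aeval_X, aeval_C]
    simp only [a, sub_self, zero_mul, mul_zero, eval_one] at this ⊢
    simpa using this.symm
  · monicity!

end
end

section
/- Let p be a prime with p ≡ 1 (mod 3) and g a primitive root modulo p. Then there exist integers r and d with 4p = r² + 27d², r ≡ 1 (mod 3), such that the cyclotomic numbers of order 3 satisfy: 9·(0,0)₃ = p + r − 8; 18·B = 2p − 4 − r − 9d where B = (0,1)₃ = (1,0)₃ = (2,2)₃; 18·C = 2p − 4 − r + 9d where C = (0,2)₃ = (2,0)₃ = (1,1)₃; and 9·D = p + 1 + r where D = (1,2)₃ = (2,1)₃. -/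
open scoped Classical

noncomputable section

/-- The cyclotomic number `(i, j)₃` of order 3 for the prime `p` and primitive root `g`:
the number of `v ∈ F_p` with `v ≠ 0`, `v + 1 ≠ 0`, `ind_g v ≡ i (mod 3)` and
`ind_g (v+1) ≡ j (mod 3)`.  (Since `3 ∣ p − 1`, the condition `ind_g v ≡ i (mod 3)` is
equivalent to the existence of some `k ≡ i (mod 3)` with `g^k = v`.) -/
def cyc3 (p g i j : ℕ) : ℕ :=
  ((Finset.range p).filter fun v : ℕ =>
    (v : ZMod p) ≠ 0 ∧ (v : ZMod p) + 1 ≠ 0 ∧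
    (∃ k : ℕ, (g : ZMod p) ^ k = (v : ZMod p) ∧ k % 3 = i) ∧
    (∃ l : ℕ, (g : ZMod p) ^ l = (v : ZMod p) + 1 ∧ l % 3 = j)).card


/-- index class -/
def PP (p g i : ℕ) (v : ZMod p) : Prop := ∃ k : ℕ, (g : ZMod p) ^ k = v ∧ k % 3 = i

section aux
variable {p g : ℕ}

lemma PP_ne (hp : p.Prime) (hg : orderOf (g : ZMod p) = p - 1) {i : ℕ} {v : ZMod p}
    (h : PP p g i v) : v ≠ 0 := by
  have := Fact.mk hp
  obtain ⟨k, rfl, -⟩ := h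
  apply pow_ne_zero
  intro h0
  rw [h0, orderOf_zero] at hg
  have h1 : (g : ZMod p) ^ 0 = 1 := pow_zero _
  have := hp.two_le
  omega

lemma mem_powers_of_orderOf_eq_card {G : Type*} [Group G] [Fintype G] {x : G}
    (h : orderOf x = Fintype.card G) (y : G) : y ∈ Submonoid.powers x := by
  rw [mem_powers_iff_mem_zpowers]
  have : Subgroup.zpowers x = ⊤ := by
    apply Subgroup.eq_top_of_card_eq
    rw [Nat.card_zpowers, h, Nat.card_eq_fintype_card]
  rw [this]; trivial

lemma PP_exists (hp : p.Prime) (hg : orderOf (g : ZMod p) = p - 1) {v : ZMod p}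
    (hv : v ≠ 0) : ∃ k : ℕ, (g : ZMod p) ^ k = v := by
  have := Fact.mk hp
  have hg0 : (g : ZMod p) ≠ 0 := PP_ne hp hg (i := 1) ⟨1, by simp, rfl⟩
  have h1 : orderOf (Units.mk0 _ hg0) = Fintype.card (ZMod p)ˣ := by
    rw [ZMod.card_units, ← hg, ← orderOf_units]; rfl
  have h2 := mem_powers_of_orderOf_eq_card h1 (Units.mk0 v hv)
  obtain ⟨k, hk⟩ := h2
  exact ⟨k, by simpa using congrArg Units.val hk⟩

lemma PP_pow (hp : p.Prime) (hmod : p % 3 = 1) (hg : orderOf (g : ZMod p) = p - 1) (i k : ℕ) :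
    PP p g i ((g : ZMod p) ^ k) ↔ k % 3 = i := by
  have := Fact.mk hp
  constructor
  · rintro ⟨l, hl, rfl⟩
    have hg0 : (g : ZMod p) ≠ 0 := PP_ne hp hg (i := 1) ⟨1, by simp, rfl⟩
    have h3 : 3 ∣ orderOf (Units.mk0 _ hg0) := by
      rw [← orderOf_units]; simp only [Units.val_mk0]; rw [hg]; omega
    have h4 : (Units.mk0 _ hg0) ^ k = (Units.mk0 _ hg0) ^ l := by
      ext; simpa using hl.symm
    rw [pow_eq_pow_iff_modEq] at h4
    exact h4.of_dvd h3
  · rintro rfl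
    exact ⟨k, rfl, rfl⟩

lemma PP_mul {i j : ℕ} {v w : ZMod p} (h : PP p g i v) (h' : PP p g j w) :
    PP p g ((i + j) % 3) (v * w) := by
  obtain ⟨k, rfl, rfl⟩ := h
  obtain ⟨l, rfl, rfl⟩ := h'
  exact ⟨k + l, by rw [pow_add], by omega⟩

lemma PP_inv (hp : p.Prime) (hmod : p % 3 = 1) (hg : orderOf (g : ZMod p) = p - 1)
    {i : ℕ} {v : ZMod p} (h : PP p g i v) : PP p g ((3 - i) % 3) v⁻¹ := by
  have := Fact.mk hp
  have hv := PP_ne hp hg h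
  obtain ⟨k, rfl, rfl⟩ := h
  obtain ⟨l, hl⟩ := PP_exists hp hg (inv_ne_zero hv)
  refine ⟨l, hl, ?_⟩
  have h1 : (g : ZMod p) ^ (k + l) = (g : ZMod p) ^ 0 := by
    rw [pow_add, hl, mul_inv_cancel₀ hv, pow_zero]
  have := (PP_pow hp hmod hg 0 (k + l)).mp ⟨0, h1.symm, rfl⟩
  omega

lemma PP_neg_one (hp : p.Prime) (hmod : p % 3 = 1) (hg : orderOf (g : ZMod p) = p - 1) :
    PP p g 0 (-1 : ZMod p) := by
  have := Fact.mk hp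
  obtain ⟨l, hl⟩ := PP_exists hp hg (v := -1) (by simp)
  refine ⟨l, hl, ?_⟩
  have h1 : (g : ZMod p) ^ (l + l) = (g : ZMod p) ^ 0 := by
    rw [pow_add, hl]; simp
  have := (PP_pow hp hmod hg 0 (l + l)).mp ⟨0, h1.symm, rfl⟩
  omega

lemma PP_neg (hp : p.Prime) (hmod : p % 3 = 1) (hg : orderOf (g : ZMod p) = p - 1)
    {i : ℕ} {v : ZMod p} (h : PP p g i v) : PP p g i (-v) := by
  have := PP_mul (PP_neg_one hp hmod hg) h
  have hi : (0 + i) % 3 = i := by obtain ⟨k, -, rfl⟩ := h; omega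
  rwa [hi, neg_one_mul] at this

lemma cyc3_eq [Fact p.Prime] (hg : orderOf (g : ZMod p) = p - 1) (i j : ℕ) :
    cyc3 p g i j = (Finset.univ.filter fun v : ZMod p => PP p g i v ∧ PP p g j (v + 1)).card := by
  have hp : p.Prime := Fact.out
  unfold cyc3
  refine Finset.card_bij (fun v _ => (v : ZMod p)) ?_ ?_ ?_
  · intro v hv
    simp only [Finset.mem_filter] at hv
    simp only [Finset.mem_filter, Finset.mem_univ, true_and]
    exact ⟨hv.2.2.2.1, hv.2.2.2.2⟩
  · intro a ha b hb hab
    simp only [Finset.mem_filter, Finset.mem_range] at ha hb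
    rw [ZMod.natCast_eq_natCast_iff] at hab
    exact Nat.ModEq.eq_of_lt_of_lt hab ha.1 hb.1
  · intro b hb
    simp only [Finset.mem_filter, Finset.mem_univ, true_and] at hb
    refine ⟨b.val, ?_, by simp⟩
    simp only [Finset.mem_filter, Finset.mem_range, ZMod.natCast_val, ZMod.cast_id', id]
    exact ⟨ZMod.val_lt b, PP_ne hp hg hb.1, PP_ne hp hg hb.2, hb.1, hb.2⟩

lemma cyc3_swap_le [Fact p.Prime] (hmod : p % 3 = 1) (hg : orderOf (g : ZMod p) = p - 1)
    (i j : ℕ) : cyc3 p g i j ≤ cyc3 p g j i := by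
  have hp : p.Prime := Fact.out
  rw [cyc3_eq hg, cyc3_eq hg]
  refine Finset.card_le_card_of_injOn (fun v => -(v + 1)) ?_ ?_
  · intro v hv
    simp only [Finset.coe_filter, Finset.mem_univ, true_and, Set.mem_setOf_eq] at hv ⊢
    refine ⟨PP_neg hp hmod hg hv.2, ?_⟩
    have : -(v + 1) + 1 = -v := by ring
    rw [this]
    exact PP_neg hp hmod hg hv.1
  · intro a _ b _ hab
    simpa using hab

lemma cyc3_swap [Fact p.Prime] (hmod : p % 3 = 1) (hg : orderOf (g : ZMod p) = p - 1)
    (i j : ℕ) : cyc3 p g i j = cyc3 p g j i :=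
  le_antisymm (cyc3_swap_le hmod hg i j) (cyc3_swap_le hmod hg j i)

lemma cyc3_inv_le [Fact p.Prime] (hmod : p % 3 = 1) (hg : orderOf (g : ZMod p) = p - 1)
    (i j : ℕ) : cyc3 p g i j ≤ cyc3 p g ((3 - i) % 3) ((j + (3 - i) % 3) % 3) := by
  have hp : p.Prime := Fact.out
  rw [cyc3_eq hg, cyc3_eq hg]
  refine Finset.card_le_card_of_injOn (fun v => v⁻¹) ?_ ?_
  · intro v hv
    simp only [Finset.coe_filter, Finset.mem_univ, true_and, Set.mem_setOf_eq] at hv ⊢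
    refine ⟨PP_inv hp hmod hg hv.1, ?_⟩
    have h0 := PP_ne hp hg hv.1
    have : v⁻¹ + 1 = (v + 1) * v⁻¹ := by field_simp; ring
    rw [this]
    exact PP_mul hv.2 (PP_inv hp hmod hg hv.1)
  · intro a _ b _ hab
    simpa using hab

lemma jac_eq [Fact p.Prime] (hmod : p % 3 = 1) (hg : orderOf (g : ZMod p) = p - 1)
    (φ ψ : MulChar (ZMod p) ℂ) (z w : ℂ) (hz : φ (g : ZMod p) = z) (hw : ψ (g : ZMod p) = w)
    (hz3 : z ^ 3 = 1) (hw3 : w ^ 3 = 1) :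
    jacobiSum φ ψ = ∑ i ∈ Finset.range 3, ∑ j ∈ Finset.range 3,
      z ^ i * w ^ j * (cyc3 p g i j : ℂ) := by
  have hp : p.Prime := Fact.out
  have e (n : ℕ) (z : ℂ) (h : z ^ 3 = 1) : z ^ n = z ^ (n % 3) := by
    conv_lhs => rw [← Nat.div_add_mod n 3, pow_add, pow_mul, h, one_pow, one_mul]
  have key : ∀ v : ZMod p, φ (-v) * ψ (1 - -v) = ∑ i ∈ Finset.range 3, ∑ j ∈ Finset.range 3,
      z ^ i * w ^ j * (if PP p g i v ∧ PP p g j (v + 1) then (1 : ℂ) else 0) := by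
    intro v
    rw [sub_neg_eq_add, add_comm 1 v]
    by_cases h0 : v = 0
    · subst h0
      have : ∀ i, ¬ PP p g i 0 := fun i h => PP_ne hp hg h rfl
      simp [this, MulChar.map_zero]
    by_cases h1 : v + 1 = 0
    · rw [h1]
      have : ∀ i, ¬ PP p g i 0 := fun i h => PP_ne hp hg h rfl
      simp [this, MulChar.map_zero]
    obtain ⟨k, hk, -⟩ := PP_neg hp hmod hg
      (show PP p g ((PP_exists hp hg h0).choose % 3) v from
        ⟨_, (PP_exists hp hg h0).choose_spec, rfl⟩)
    have hkv : PP p g (k % 3) v := by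
      have := PP_neg hp hmod hg (show PP p g (k % 3) (-v) from ⟨k, hk, rfl⟩)
      rwa [neg_neg] at this
    obtain ⟨l, hl⟩ := PP_exists hp hg h1
    obtain ⟨k', hk', hkk⟩ := hkv
    have a1 : ∀ i, PP p g i v ↔ k % 3 = i := by
      intro i; rw [← hk', PP_pow hp hmod hg, hkk]
    have a2 : ∀ i, PP p g i (v + 1) ↔ l % 3 = i := by
      intro i; rw [← hl, PP_pow hp hmod hg]
    simp only [a1, a2]
    rw [← hk, ← hl, map_pow, map_pow, hz, hw, e k z hz3, e l w hw3]
    have hk3 : k % 3 < 3 := Nat.mod_lt _ (by norm_num)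
    have hl3 : l % 3 < 3 := Nat.mod_lt _ (by norm_num)
    generalize k % 3 = a at *
    generalize l % 3 = b at *
    interval_cases a <;> interval_cases b <;> simp [Finset.sum_range_succ]
  unfold jacobiSum
  rw [← Equiv.sum_comp (Equiv.neg (ZMod p))]
  simp only [Equiv.neg_apply]
  rw [Finset.sum_congr rfl (fun v _ => key v), Finset.sum_comm]
  refine Finset.sum_congr rfl fun i _ => ?_
  rw [Finset.sum_comm]
  refine Finset.sum_congr rfl fun j _ => ?_
  rw [← Finset.mul_sum, Finset.sum_boole, cyc3_eq hg]

end aux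

/-- For a prime `p ≡ 1 (mod 3)` and a primitive root `g` modulo `p`,
there are integers `r`, `d` with `4p = r² + 27d²`, `r ≡ 1 (mod 3)`, such that the
cyclotomic numbers of order 3 satisfy `9·(0,0)₃ = p + r − 8`;
`18·B = 2p − 4 − r − 9d` where `B = (0,1)₃ = (1,0)₃ = (2,2)₃`;
`18·C = 2p − 4 − r + 9d` where `C = (0,2)₃ = (2,0)₃ = (1,1)₃`; and
`9·D = p + 1 + r` where `D = (1,2)₃ = (2,1)₃`. -/
theorem cyclotomic_numbers_order_three
    (p g : ℕ)
    (hp : p.Prime)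
    (hmod : p % 3 = 1)
    (hg : orderOf (g : ZMod p) = p - 1) :
    ∃ r d : ℤ, 4 * (p : ℤ) = r ^ 2 + 27 * d ^ 2 ∧ r % 3 = 1 ∧
      9 * (cyc3 p g 0 0 : ℤ) = (p : ℤ) + r - 8 ∧
      cyc3 p g 0 1 = cyc3 p g 1 0 ∧ cyc3 p g 1 0 = cyc3 p g 2 2 ∧
      18 * (cyc3 p g 0 1 : ℤ) = 2 * (p : ℤ) - 4 - r - 9 * d ∧
      cyc3 p g 0 2 = cyc3 p g 2 0 ∧ cyc3 p g 2 0 = cyc3 p g 1 1 ∧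
      18 * (cyc3 p g 0 2 : ℤ) = 2 * (p : ℤ) - 4 - r + 9 * d ∧
      cyc3 p g 1 2 = cyc3 p g 2 1 ∧
      9 * (cyc3 p g 1 2 : ℤ) = (p : ℤ) + 1 + r := by
  have hF : Fact p.Prime := ⟨hp⟩
  have hg0 : (g : ZMod p) ≠ 0 := PP_ne hp hg (i := 1) ⟨1, by simp, rfl⟩
  have hgu : IsUnit (g : ZMod p) := isUnit_iff_ne_zero.mpr hg0
  obtain ⟨χ, hχ⟩ := MulChar.exists_mulChar_orderOf (ZMod p) (R := ℂ) (n := 3)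
    (by rw [ZMod.card]; omega) (Complex.isPrimitiveRoot_exp 3 (by norm_num))
  have hχ3 : χ ^ 3 = 1 := by rw [← hχ]; exact pow_orderOf_eq_one χ
  have hχ1 : χ ≠ 1 := by intro h; rw [h, orderOf_one] at hχ; omega
  have hinv : χ⁻¹ = χ * χ := by
    rw [inv_eq_iff_mul_eq_one, ← hχ3, pow_succ, pow_two, mul_assoc]
  have hχ2 : χ * χ ≠ 1 := by
    rw [← hinv]; simpa using hχ1
  obtain ⟨z, hz⟩ : ∃ z, χ (g : ZMod p) = z := ⟨_, rfl⟩
  have hz3 : z ^ 3 = 1 := by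
    rw [← hz, ← MulChar.pow_apply' χ (by norm_num), hχ3, MulChar.one_apply hgu]
  have hz1 : z ≠ 1 := by
    intro h
    apply hχ1
    ext u
    obtain ⟨k, hk⟩ := PP_exists hp hg u.ne_zero
    rw [← hk, map_pow, hz, h, one_pow, MulChar.one_apply (hgu.pow k)]
  have hzz : z ^ 2 + z + 1 = 0 := by
    have : (z - 1) * (z ^ 2 + z + 1) = 0 := by linear_combination hz3
    exact (mul_eq_zero.mp this).resolve_left (sub_ne_zero.mpr hz1)
  have hzi : χ⁻¹ (g : ZMod p) = z ^ 2 := by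
    rw [hinv, MulChar.mul_apply, hz]; ring
  have hzi3 : (z ^ 2) ^ 3 = 1 := by linear_combination (z ^ 3 + 1) * hz3
  have hneg : χ (-1) = 1 := by
    have h1 : χ (-1) ^ 3 = 1 := by
      rw [← MulChar.pow_apply' χ (by norm_num), hχ3, MulChar.one_apply (by simp)]
    have h2 : χ (-1) ^ 2 = 1 := by rw [← map_pow]; simp
    linear_combination h1 - χ (-1) * h2
  have J1 := jac_eq hmod hg χ χ z z hz hz hz3 hz3
  have J2 := jac_eq hmod hg χ⁻¹ χ⁻¹ _ _ hzi hzi hzi3 hzi3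
  have J3 := jac_eq hmod hg χ χ⁻¹ _ _ hz hzi hz3 hzi3
  have J0 := jac_eq hmod hg 1 1 1 1 (MulChar.one_apply hgu) (MulChar.one_apply hgu)
    (by simp) (by simp)
  have N := jacobiSum_mul_jacobiSum_inv (F := ZMod p) (F' := ℂ)
    (by rw [ZMod.ringChar_zmod_n, ringChar.eq_zero]; exact hp.ne_zero.symm) hχ1 hχ1 hχ2
  rw [jacobiSum_nontrivial_inv hχ1, hneg] at J3
  rw [jacobiSum_one_one, ZMod.card] at J0
  rw [J1, J2, ZMod.card] at N
  have s01 := cyc3_swap hmod hg 0 1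
  have s02 := cyc3_swap hmod hg 0 2
  have s12 := cyc3_swap hmod hg 1 2
  have s22 : cyc3 p g 1 0 = cyc3 p g 2 2 :=
    le_antisymm (cyc3_inv_le hmod hg 1 0) (cyc3_inv_le hmod hg 2 2)
  have s11 : cyc3 p g 2 0 = cyc3 p g 1 1 :=
    le_antisymm (cyc3_inv_le hmod hg 2 0) (cyc3_inv_le hmod hg 1 1)
  simp only [Finset.sum_range_succ, Finset.sum_range_zero, ← s11, ← s22, ← s01, ← s02, ← s12]
    at J0 J3 N
  generalize cyc3 p g 0 0 = A at *
  generalize cyc3 p g 0 1 = B at *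
  generalize cyc3 p g 0 2 = C at *
  generalize cyc3 p g 1 2 = D at *
  have hz2 : z ^ 2 = -z - 1 := by linear_combination hzz
  have E0 : (p : ℤ) - 2 = A + 3 * B + 3 * C + 2 * D := by
    have : (p : ℂ) - 2 = A + 3 * B + 3 * C + 2 * D := by rw [J0]; ring
    exact_mod_cast this
  have E3 : (A : ℤ) - D = -1 := by
    have : (A : ℂ) - D = -1 := by
      rw [J3]
      simp only [hz2]
      ring_nf
      simp only [show z ^ 4 = z by linear_combination z * hz3, hz3, hz2]
      ring
    exact_mod_cast this
  have E4 : ((A : ℤ) + 2 * D) ^ 2 + 9 * B ^ 2 + 9 * C ^ 2 - 3 * (A + 2 * D) * B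
      - 3 * (A + 2 * D) * C - 9 * B * C = p := by
    have : ((A : ℂ) + 2 * D) ^ 2 + 9 * B ^ 2 + 9 * C ^ 2 - 3 * (A + 2 * D) * B
      - 3 * (A + 2 * D) * C - 9 * B * C = p := by
      rw [← N]
      simp only [hz2]
      ring_nf
      simp only [show z ^ 8 = z ^ 2 by linear_combination (z ^ 5 + z ^ 2) * hz3,
        show z ^ 7 = z by linear_combination (z ^ 4 + z) * hz3,
        show z ^ 6 = 1 by linear_combination (z ^ 3 + 1) * hz3,
        show z ^ 5 = z ^ 2 by linear_combination z ^ 2 * hz3,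
        show z ^ 4 = z by linear_combination z * hz3, hz3, hz2]
      ring
    exact_mod_cast this
  refine ⟨9 * D - p - 1, C - B, ?_, ?_, ?_, s01, s22, ?_, s02, s11, ?_, s12, ?_⟩
  · have hA : (A : ℤ) = D - 1 := by linarith
    have hP : (p : ℤ) = 3 * B + 3 * C + 3 * D + 1 := by linarith
    rw [← E4, hA] 
    rw [hA] at E4
    have hr : 9 * (D : ℤ) - p - 1 = 6 * D - 3 * B - 3 * C - 2 := by linarith
    rw [E4, hr]
    linear_combination (-4) * E4
  · omega
  all_goals linarith

end
end

section
/- There is no element z of the field L = ℚ(ζ₇ + ζ₇⁻¹) whose field norm N_{L/ℚ}(z) equals 2. -/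
noncomputable section

/-- `ζ₇ = e^{2πi/7}`, a primitive seventh root of unity in `ℂ`. -/
def zeta7 : ℂ := Complex.exp (2 * Real.pi * Complex.I / 7)

/-- `L = ℚ(ζ₇ + ζ₇⁻¹)`, the real subfield of `ℚ(ζ₇)` of degree 3 over `ℚ`. -/
def L7 : IntermediateField ℚ ℂ := IntermediateField.adjoin ℚ {zeta7 + zeta7⁻¹}

open Polynomial in
theorem f7_irr : Irreducible (X ^ 3 + X ^ 2 - 2 * X - 1 : ℚ[X]) := by
  have hm : (X ^ 3 + X ^ 2 - 2 * X - 1 : ℤ[X]).Monic := by monicity!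
  have h1 : Irreducible (X ^ 3 + X ^ 2 - 2 * X - 1 : ℤ[X]) := by
    apply hm.irreducible_of_irreducible_map (Int.castRingHom (ZMod 2))
    have hm2 := hm.map (Int.castRingHom (ZMod 2))
    have hd : ((X ^ 3 + X ^ 2 - 2 * X - 1 : ℤ[X]).map (Int.castRingHom (ZMod 2))).natDegree = 3 := by
      rw [hm.natDegree_map]; compute_degree!
    rw [hm2.irreducible_iff_roots_eq_zero_of_degree_le_three (by rw [hd]; norm_num) (by rw [hd])]
    rw [Multiset.eq_zero_iff_forall_notMem]
    intro x hx
    have hx := (mem_roots'.1 hx).2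
    simp [IsRoot] at hx
    clear * - hx
    revert x
    decide
  have h2 := (hm.irreducible_iff_irreducible_map_fraction_map (K := ℚ)).1 h1
  simpa using h2

theorem zeta7_eq : (zeta7 + zeta7⁻¹) ^ 3 + (zeta7 + zeta7⁻¹) ^ 2 - 2 * (zeta7 + zeta7⁻¹) - 1 = 0 := by
  have h : IsPrimitiveRoot zeta7 7 := by
    have := Complex.isPrimitiveRoot_exp 7 (by norm_num)
    simpa [zeta7] using this
  have h0 : zeta7 ≠ 0 := Complex.exp_ne_zero _
  have hs := h.geom_sum_eq_zero (by norm_num)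
  simp [Finset.sum_range_succ] at hs
  field_simp
  linear_combination hs

def N7 {R : Type*} [CommRing R] (a b c : R) : R :=
  a * ((a + 2 * c) * (a - b + 3 * c) - (2 * b - c) * (b - c))
  - c * (b * (a - b + 3 * c) - (2 * b - c) * c)
  + (b - c) * (b * (b - c) - (a + 2 * c) * c)

theorem N7_even (a b c : ℤ) (h : (2 : ℤ) ∣ N7 a b c) : 2 ∣ a ∧ 2 ∣ b ∧ 2 ∣ c := by
  have key : ∀ a b c : ZMod 2, N7 a b c = 0 → a = 0 ∧ b = 0 ∧ c = 0 := by
    unfold N7; decide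
  have e (x : ℤ) : 2 ∣ x ↔ (x : ZMod 2) = 0 := (ZMod.intCast_zmod_eq_zero_iff_dvd x 2).symm
  rw [e] at h
  simp only [e]
  apply key
  rw [← h]
  unfold N7
  push_cast
  rfl

theorem N7_descent (n : ℕ) : ∀ a b c d : ℤ, d.natAbs = n → N7 a b c = 2 * d ^ 3 → d = 0 := by
  induction n using Nat.strong_induction_on with
  | _ n ih =>
    intro a b c d hn h
    by_contra hd
    obtain ⟨⟨a, rfl⟩, ⟨b, rfl⟩, ⟨c, rfl⟩⟩ := N7_even a b c ⟨_, h⟩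
    have h4 : 4 * N7 a b c = d ^ 3 := by
      unfold N7 at *; linarith
    have : (2 : ℤ) ∣ d := Int.prime_two.dvd_of_dvd_pow (n := 3) ⟨2 * N7 a b c, by rw [← h4]; ring⟩
    obtain ⟨d, rfl⟩ := this
    have := ih d.natAbs (by omega) a b c d rfl (by linarith)
    omega

theorem N7_rat (a b c : ℚ) : N7 a b c ≠ 2 := by
  intro h
  have hD : ((a.den * b.den * c.den : ℕ) : ℤ) ≠ 0 := by
    have := a.den_nz; have := b.den_nz; have := c.den_nz
    positivity
  apply hD
  apply N7_descent _ (a.num * b.den * c.den) (b.num * a.den * c.den) (c.num * a.den * b.den) _ rfl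
  have ha : (a.num : ℚ) = a * a.den := by simp
  have hb : (b.num : ℚ) = b * b.den := by simp
  have hc : (c.num : ℚ) = c * c.den := by simp
  have : ((N7 (a.num * b.den * c.den) (b.num * a.den * c.den) (c.num * a.den * b.den) : ℤ) : ℚ)
     = ((2 * ((a.den * b.den * c.den : ℕ) : ℤ) ^ 3 : ℤ) : ℚ) := by
    unfold N7 at *
    push_cast
    rw [ha, hb, hc]
    linear_combination ((a.den * b.den * c.den : ℚ)) ^ 3 * h
  exact_mod_cast this

theorem exists_basis7 : ∃ (b : Module.Basis (Fin 3) ℚ L7) (x : L7), x ^ 3 + x ^ 2 - 2 * x - 1 = 0 ∧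
    ∀ i, b i = x ^ (i : ℕ) := by
  unfold L7
  have hm : (Polynomial.X ^ 3 + Polynomial.X ^ 2 - 2 * Polynomial.X - 1 : Polynomial ℚ).Monic := by
    monicity!
  have he : Polynomial.aeval (zeta7 + zeta7⁻¹)
      (Polynomial.X ^ 3 + Polynomial.X ^ 2 - 2 * Polynomial.X - 1 : Polynomial ℚ) = 0 := by
    simpa [map_ofNat] using zeta7_eq
  have hmin := minpoly.eq_of_irreducible_of_monic f7_irr he hm
  have hint : IsIntegral ℚ (zeta7 + zeta7⁻¹) := ⟨_, hm, by simpa [Polynomial.aeval_def] using he⟩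
  let B := IntermediateField.adjoin.powerBasis hint
  have hdim : B.dim = 3 := by
    simp only [B, IntermediateField.adjoin.powerBasis_dim, ← hmin]
    compute_degree!
  refine ⟨B.basis.reindex (finCongr hdim), IntermediateField.AdjoinSimple.gen ℚ _, ?_, ?_⟩
  · apply Subtype.ext
    exact zeta7_eq
  · intro i
    simp [B]

theorem norm7 (z : L7) : ∃ a b c : ℚ, Algebra.norm ℚ z = N7 a b c := by
  obtain ⟨B, x, hx, hB⟩ := exists_basis7
  refine ⟨B.repr z 0, B.repr z 1, B.repr z 2, ?_⟩
  have hz := B.sum_repr z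
  simp only [Fin.sum_univ_three] at hz
  generalize B.repr z 0 = a at *
  generalize B.repr z 1 = b at *
  generalize B.repr z 2 = c at *
  have hr (p q r : ℚ) (w : L7) (hw : w = p • B 0 + q • B 1 + r • B 2) :
      B.repr w 0 = p ∧ B.repr w 1 = q ∧ B.repr w 2 = r := by
    subst hw
    simp [Finsupp.single_apply]
  have h0 : B 0 = 1 := by simp [hB]
  have h1 : B 1 = x := by simp [hB]
  have h2 : B 2 = x ^ 2 := by simp [hB]
  obtain ⟨a0, a1, a2⟩ := hr a b c (z * B 0) (by rw [← hz, h0]; simp)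
  obtain ⟨b0, b1, b2⟩ := hr c (a + 2 * c) (b - c) (z * B 1) (by
    rw [← hz, h0, h1, h2]
    simp only [Algebra.smul_def, map_add, map_sub, map_mul, map_ofNat]
    linear_combination algebraMap ℚ L7 c * hx)
  obtain ⟨c0, c1, c2⟩ := hr (b - c) (2 * b - c) (a - b + 3 * c) (z * B 2) (by
    rw [← hz, h0, h1, h2]
    simp only [Algebra.smul_def, map_add, map_sub, map_mul, map_ofNat]
    linear_combination (algebraMap ℚ L7 c * x + (algebraMap ℚ L7 b - algebraMap ℚ L7 c)) * hx)
  rw [Algebra.norm_eq_matrix_det B, Matrix.det_fin_three]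
  simp only [Algebra.leftMulMatrix_eq_repr_mul, a0, a1, a2, b0, b1, b2, c0, c1, c2]
  unfold N7
  ring

/-- No element of `L = ℚ(ζ₇ + ζ₇⁻¹)` has field norm `N_{L/ℚ}` equal
to `2`. -/
theorem no_element_of_norm_two : ¬ ∃ z : L7, Algebra.norm ℚ z = 2 := by
  rintro ⟨z, hz⟩
  obtain ⟨a, b, c, h⟩ := norm7 z
  exact N7_rat a b c (h ▸ hz)

end
end

section
/- There is no element z of the field L = ℚ(ζ₇ + ζ₇⁻¹) whose field norm N_{L/ℚ}(z) equals 4. -/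
noncomputable section

open Polynomial in
lemma theta_root : (zeta7 + zeta7⁻¹)^3 + (zeta7 + zeta7⁻¹)^2 - 2 * (zeta7 + zeta7⁻¹) - 1 = 0 := by
  have hp : IsPrimitiveRoot zeta7 7 := by
    have := Complex.isPrimitiveRoot_exp 7 (by norm_num)
    simpa [zeta7] using this
  have h7 : zeta7 ^ 7 = 1 := hp.pow_eq_one
  have h1 : zeta7 - 1 ≠ 0 := sub_ne_zero.mpr (hp.ne_one (by norm_num))
  have h0 : zeta7 ≠ 0 := hp.ne_zero (by norm_num)
  have hs : zeta7^6 + zeta7^5 + zeta7^4 + zeta7^3 + zeta7^2 + zeta7 + 1 = 0 := by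
    apply mul_left_cancel₀ h1
    linear_combination h7
  field_simp
  linear_combination hs

open Polynomial in
lemma cubic_monic : (X^3 + X^2 - 2 * X - 1 : ℚ[X]).Monic := by
  have : (X^3 + X^2 - 2 * X - 1 : ℚ[X]) = X^3 + (C 1 * X^2 + C (-2) * X + C (-1)) := by
    simp only [map_neg, map_one, map_ofNat]; ring
  rw [this]
  exact monic_X_pow_add (degree_quadratic_lt)

open Polynomial in
lemma cubic_natDegree : (X^3 + X^2 - 2 * X - 1 : ℚ[X]).natDegree = 3 := by
  have : (X^3 + X^2 - 2 * X - 1 : ℚ[X]) = C 1 * X^3 + C 1 * X^2 + C (-2) * X + C (-1) := by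
    simp only [map_neg, map_one, map_ofNat]; ring
  rw [this]
  exact natDegree_cubic one_ne_zero

lemma no_rat_root (x : ℚ) : x^3 + x^2 - 2 * x - 1 ≠ 0 := by
  intro h
  have hi : IsIntegral ℤ x := by
    refine ⟨Polynomial.X^3 + (Polynomial.C 1 * Polynomial.X^2 + Polynomial.C (-2) * Polynomial.X + Polynomial.C (-1)), 
      Polynomial.monic_X_pow_add (Polynomial.degree_quadratic_lt), ?_⟩
    simp
    linear_combination h
  obtain ⟨n, rfl⟩ := IsIntegrallyClosed.isIntegral_iff.mp hi
  have h' : n * (n^2 + n - 2) = 1 := by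
    have : (n:ℚ)^3 + n^2 - 2 * n - 1 = 0 := by simpa using h
    have h2 : n^3 + n^2 - 2 * n - 1 = 0 := by exact_mod_cast this
    linear_combination h2
  rcases Int.eq_one_or_neg_one_of_mul_eq_one h' with rfl | rfl <;> norm_num at h'

open Polynomial in
lemma cubic_irred : Irreducible (X^3 + X^2 - 2 * X - 1 : ℚ[X]) := by
  rw [irreducible_iff_roots_eq_zero_of_degree_le_three]
  · rw [Multiset.eq_zero_iff_forall_notMem]
    intro x hx
    have := (mem_roots'.mp hx).2
    apply no_rat_root x
    simpa [IsRoot] using this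
  · rw [cubic_natDegree]; norm_num
  · rw [cubic_natDegree]

lemma theta_integral : IsIntegral ℚ (zeta7 + zeta7⁻¹) :=
  ⟨_, cubic_monic, by simpa using theta_root⟩

lemma theta_minpoly : (minpoly ℚ (zeta7 + zeta7⁻¹)).natDegree = 3 := by
  rw [← minpoly.eq_of_irreducible_of_monic cubic_irred (by simpa [map_ofNat] using theta_root) cubic_monic,
    cubic_natDegree]

lemma norm_form (z : L7) : ∃ a b c : ℚ, Algebra.norm ℚ z =
    Matrix.det !![a, c, b - c; b, a + 2 * c, 2 * b - c; c, b - c, a - b + 3 * c] := by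
  let pb : PowerBasis ℚ L7 := IntermediateField.adjoin.powerBasis theta_integral
  have hd : pb.dim = 3 := theta_minpoly
  let B : Module.Basis (Fin 3) ℚ L7 := pb.basis.reindex (finCongr hd)
  have hB : ∀ i, B i = pb.gen ^ (i : ℕ) := by intro i; simp [B]
  have hg : pb.gen ^ 3 = 1 + 2 * pb.gen - pb.gen ^ 2 := by
    apply Subtype.ext
    have : (pb.gen : ℂ) = zeta7 + zeta7⁻¹ := rfl
    have h2 : ((2 : L7) : ℂ) = 2 := rfl
    push_cast
    rw [this, h2]
    linear_combination theta_root
  refine ⟨B.repr z 0, B.repr z 1, B.repr z 2, ?_⟩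
  rw [Algebra.norm_eq_matrix_det B]
  congr 1
  have hz := B.sum_repr z
  set a := B.repr z 0
  set b := B.repr z 1
  set c := B.repr z 2
  rw [Fin.sum_univ_three] at hz
  set N : Matrix (Fin 3) (Fin 3) ℚ := !![a, c, b - c; b, a + 2 * c, 2 * b - c; c, b - c, a - b + 3 * c] with hN
  have key : ∀ j, z * B j = ∑ i, N i j • B i := by
    intro j
    rw [← hz, Fin.sum_univ_three]
    change (a • B 0 + b • B 1 + c • B 2) * _ = _
    simp only [hB, Algebra.smul_def]
    have h4 : pb.gen ^ 4 = pb.gen + 2 * pb.gen^2 - pb.gen ^ 3 := by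
      linear_combination pb.gen * hg
    fin_cases j <;> simp [hN]
    · linear_combination (c : L7) * hg
    · linear_combination (b : L7) * hg + (c : L7) * (h4 - hg)
  ext i j
  rw [Algebra.leftMulMatrix_eq_repr_mul, key, B.repr_sum_self]

lemma even_of (A B C : ℤ) (h : (2:ℤ) ∣ Matrix.det !![A, C, B - C; B, A + 2 * C, 2 * B - C; C, B - C, A - B + 3 * C]) :
    2 ∣ A ∧ 2 ∣ B ∧ 2 ∣ C := by
  simp only [Matrix.det_fin_three] at h
  simp at h
  simp only [← even_iff_two_dvd] at *
  by_cases hA : Even A <;> by_cases hB : Even B <;> by_cases hC : Even C <;>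
    simp_all [parity_simps] <;> exact absurd h (by decide)

lemma descent (d : ℕ) : ∀ A B C : ℤ, 
    Matrix.det !![A, C, B - C; B, A + 2 * C, 2 * B - C; C, B - C, A - B + 3 * C] = 4 * (d:ℤ)^3 → d = 0 := by
  induction d using Nat.strong_induction_on with
  | _ d ih =>
  intro A B C h
  by_contra hd
  obtain ⟨⟨a, rfl⟩, ⟨b, rfl⟩, ⟨c, rfl⟩⟩ := even_of A B C (by rw [h]; exact ⟨2 * d^3, by ring⟩)
  have h2 : Matrix.det !![a, c, b - c; b, a + 2 * c, 2 * b - c; c, b - c, a - b + 3 * c] * 2 = (d:ℤ)^3 := by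
    simp [Matrix.det_fin_three] at h ⊢
    linarith
  have : (2:ℤ) ∣ d := Int.prime_two.dvd_of_dvd_pow (Dvd.intro_left _ h2)
  obtain ⟨e, rfl⟩ : 2 ∣ d := by exact_mod_cast this
  have := ih e (by omega) a b c (by push_cast at h2; linarith)
  omega

/-- No element of `L = ℚ(ζ₇ + ζ₇⁻¹)` has field norm `N_{L/ℚ}` equal
to `4`. -/
theorem no_element_of_norm_four : ¬ ∃ z : L7, Algebra.norm ℚ z = 4 := by
  rintro ⟨z, hz⟩
  obtain ⟨a, b, c, h⟩ := norm_form z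
  rw [hz] at h
  have hd : a.den * b.den * c.den ≠ 0 := by simp
  apply hd
  apply descent _ (a.num * b.den * c.den) (b.num * a.den * c.den) (c.num * a.den * b.den)
  have ha : (a.num : ℚ) = a * a.den := (Rat.mul_den_eq_num a).symm
  have hb : (b.num : ℚ) = b * b.den := (Rat.mul_den_eq_num b).symm
  have hc : (c.num : ℚ) = c * c.den := (Rat.mul_den_eq_num c).symm
  simp [Matrix.det_fin_three] at h ⊢
  have : Function.Injective (Int.cast : ℤ → ℚ) := Int.cast_injective
  apply this
  push_cast
  rw [ha, hb, hc, h]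
  ring

end
end

section
/- Let K be a field and L/K a finite Galois extension of degree n whose Galois group is cyclic, generated by S. Fix a nonzero α ∈ K. In M_n(L) let D(z) = diag(z, S(z), …, S^{n−1}(z)) for z ∈ L, and let U ∈ M_n(L) have entries U_{i+1,i} = 1 for 1 ≤ i ≤ n−1, U_{1,n} = α, and 0 otherwise (so U^n = α·I and D(z)U = U·D(S(z))). If none of α, α², …, α^{n−1} is the norm N_{L/K}(z) of an element z ∈ L, then the K-subalgebra of M_n(L) generated by U together with all D(z), z ∈ L, is a division ring of dimension n² over K. -/
lemma aux_semilin {K L V : Type*} [Field K] [Field L] [Algebra K L] [AddCommGroup V] [Module L V]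
    (S : L ≃ₐ[K] L) (φ : V →+ V) (hφ : ∀ (c : L) (v : V), φ (c • v) = S c • φ v)
    (r n : ℕ) (b : Module.Basis (Fin r) L V) (a : L) (h : ∀ v, φ^[n] v = a • v) :
    ∃ z : L, (∏ s ∈ Finset.range n, (S ^ s) z) = a ^ r := by
  classical
  let M : Matrix (Fin r) (Fin r) L := fun i j => b.repr (φ (b j)) i
  have key : ∀ k : ℕ, ∃ N : Matrix (Fin r) (Fin r) L,
      N.det = (∏ s ∈ Finset.range k, (S ^ s) M.det) ∧ ∀ j, φ^[k] (b j) = ∑ i, N i j • b i := by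
    intro k
    induction k with
    | zero =>
      refine ⟨1, by simp, fun j => ?_⟩
      simp [Matrix.one_apply, ite_smul]
    | succ k ih =>
      obtain ⟨N, h1, h2⟩ := ih
      have hk : ∀ (k : ℕ) (c : L) (v : V), φ^[k] (c • v) = (S ^ k) c • φ^[k] v := by
        intro k
        induction k with
        | zero => simp
        | succ k ih => intro c v; rw [Function.iterate_succ_apply, hφ, ih]; rfl
      refine ⟨N * ((S ^ k : L ≃ₐ[K] L) : L →+* L).mapMatrix M, ?_, fun j => ?_⟩
      · rw [Matrix.det_mul, h1, Finset.prod_range_succ, ← RingHom.map_det]; rfl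
      · rw [Function.iterate_succ_apply, ← b.sum_repr (φ (b j))]
        have : ∀ f : Fin r → V, φ^[k] (∑ i, f i) = ∑ i, φ^[k] (f i) := by
          intro f
          clear h2 h1
          induction k generalizing f with
          | zero => rfl
          | succ k ih => simp only [Function.iterate_succ_apply, map_sum]; exact ih _
        rw [this]
        simp only [hk, h2, Matrix.mul_apply, Finset.sum_smul, Finset.smul_sum, smul_smul]
        rw [Finset.sum_comm]
        refine Finset.sum_congr rfl fun i _ => Finset.sum_congr rfl fun l _ => ?_
        rw [mul_comm]; rfl
  obtain ⟨N, h1, h2⟩ := key n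
  refine ⟨M.det, ?_⟩
  rw [← h1]
  have : N = a • (1 : Matrix (Fin r) (Fin r) L) := by
    ext i j
    have h3 := h2 j
    rw [h] at h3
    have h4 := congrArg (fun v => b.repr v i) h3
    simp [Finsupp.single_apply] at h4
    simp [Matrix.one_apply, ← h4, eq_comm]
  rw [this]; simp

/-- **Pierce's criterion for cyclic algebras.** Let `L/K` be a finite
cyclic Galois extension of degree `n` with Galois group generated by `S`, and let
`α ∈ K*`.  With `U` and `D(z)` the matrices in `M_n(L)` modeling the cyclic algebra
`(L/K, S, α)`, if none of `α, α², …, α^{n-1}` is a norm `N_{L/K}(z) = ∏_s S^s(z)` of an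
element of `L`, then the `K`-subalgebra of `M_n(L)` generated by `U` and all `D(z)` is a
division ring of dimension `n²` over `K`. -/
theorem cyclic_algebra_division_ring_of_not_norm
    (K L : Type*) [Field K] [Field L] [Algebra K L]
    [FiniteDimensional K L] [IsGalois K L]
    (n : ℕ) (hn : Module.finrank K L = n)
    (S : L ≃ₐ[K] L) (hSgen : ∀ T : L ≃ₐ[K] L, T ∈ Subgroup.zpowers S)
    (α : K) (hα : α ≠ 0)
    (U : Matrix (Fin n) (Fin n) L)
    (hU : ∀ i j : Fin n, U i j =
      if (i : ℕ) = (j : ℕ) + 1 then 1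
      else if (i : ℕ) = 0 ∧ (j : ℕ) = n - 1 then algebraMap K L α else 0)
    (D : L → Matrix (Fin n) (Fin n) L)
    (hD : ∀ z : L, D z = Matrix.diagonal fun i : Fin n => (S ^ (i : ℕ)) z)
    (hnorm : ∀ m : ℕ, 1 ≤ m → m ≤ n - 1 →
      ∀ z : L, (∏ s ∈ Finset.range n, (S ^ s) z) ≠ algebraMap K L (α ^ m)) :
    (∀ x : Algebra.adjoin K ({U} ∪ Set.range D), x ≠ 0 → IsUnit x) ∧
    Module.finrank K (Algebra.adjoin K ({U} ∪ Set.range D)) = n ^ 2 := by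
  classical
  have hn0 : 0 < n := hn ▸ Module.finrank_pos
  have hSn : S ^ n = 1 := by
    rw [← hn, ← IsGalois.card_aut_eq_finrank]; exact pow_card_eq_one'
  set a : L := algebraMap K L α with ha
  have ha0 : a ≠ 0 := by simpa [ha] using hα
  have hSa : S a = a := S.commutes α
  -- the semilinear map
  let φ : (Fin n → L) →+ (Fin n → L) :=
    { toFun := fun v => U.mulVec (fun i => S (v i))
      map_zero' := by ext i; simp [Matrix.mulVec, dotProduct]
      map_add' := fun v w => by
        ext i; simp [Matrix.mulVec, dotProduct, mul_add, Finset.sum_add_distrib] }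
  have hφdef : ∀ v, φ v = U.mulVec (fun i => S (v i)) := fun v => rfl
  have hφs : ∀ (c : L) v, φ (c • v) = S c • φ v := by
    intro c v
    rw [hφdef, hφdef, ← Matrix.mulVec_smul]
    congr 1; ext i; simp
  have hmul0 : ∀ (w : Fin n → L) (i : Fin n) (h : (i : ℕ) = 0),
      U.mulVec w i = a * w ⟨n - 1, by omega⟩ := by
    intro w i h
    simp only [Matrix.mulVec, dotProduct, hU]
    rw [Finset.sum_eq_single ⟨n - 1, by omega⟩]
    · simp [h]
    · intro j _ hj
      have : (j : ℕ) ≠ n - 1 := fun h' => hj (Fin.ext h')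
      simp [h, this]
    · simp
  have hmul1 : ∀ (w : Fin n → L) (i : Fin n) (h : (i : ℕ) ≠ 0),
      U.mulVec w i = w ⟨i - 1, by omega⟩ := by
    intro w i h
    simp only [Matrix.mulVec, dotProduct, hU]
    rw [Finset.sum_eq_single ⟨i - 1, by omega⟩]
    · have : (i : ℕ) = i - 1 + 1 := by omega
      simp [← this]
    · intro j _ hj
      have : (i : ℕ) ≠ j + 1 := fun h' => hj (Fin.ext (by simp; omega))
      simp [h, this]
    · simp
  have hit : ∀ (k : ℕ) (hk : k ≤ n) (v : Fin n → L) (i : Fin n), φ^[k] v i =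
      if h : k ≤ (i : ℕ) then (S ^ k) (v ⟨i - k, by omega⟩)
      else a * (S ^ k) (v ⟨n + i - k, by omega⟩) := by
    intro k
    induction k with
    | zero => intro hk v i; simp
    | succ k ih =>
      intro hk v i
      rw [Function.iterate_succ_apply', hφdef]
      by_cases hi : (i : ℕ) = 0
      · rw [hmul0 _ _ hi, ih (by omega), dif_pos (by simp; omega), dif_neg (by omega), pow_succ']
        simp only [AlgEquiv.mul_apply]
        congr 5
        omega
      · rw [hmul1 _ _ hi, ih (by omega), pow_succ']
        simp only [AlgEquiv.mul_apply]
        by_cases h : k + 1 ≤ (i : ℕ)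
        · rw [dif_pos (by omega), dif_pos h]
          congr 4
          omega
        · rw [dif_neg (by omega), dif_neg h, map_mul, hSa]
          congr 5
          omega
  have hφn : ∀ v, φ^[n] v = a • v := by
    intro v; ext i
    rw [hit n le_rfl, dif_neg (by omega), hSn]
    simp
  have hφinj : ∀ v, φ v = 0 → v = 0 := by
    intro v hv
    have h1 := hφn v
    obtain ⟨m, rfl⟩ : ∃ m, n = m + 1 := ⟨n - 1, by omega⟩
    rw [Function.iterate_succ_apply, hv, iterate_map_zero] at h1
    exact (smul_eq_zero.mp h1.symm).resolve_left ha0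
  have hUinj : Function.Injective U.mulVec := by
    have : Function.Injective U.mulVecLin := by
      rw [← LinearMap.ker_eq_bot, LinearMap.ker_eq_bot']
      intro v hv
      have h2 := hφinj (fun i => S.symm (v i)) (by
        rw [hφdef]; simpa using hv)
      ext i
      simpa using congrFun h2 i
    exact this
  have hUunit : IsUnit U := Matrix.mulVec_injective_iff_isUnit.mp hUinj
  -- elements of the algebra
  let σ : Matrix (Fin n) (Fin n) L →+* Matrix (Fin n) (Fin n) L :=
    ((S : L →+* L)).mapMatrix
  have hσ : ∀ x i j, σ x i j = S (x i j) := fun x i j => rfl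
  have hφσ : ∀ (x : Matrix (Fin n) (Fin n) L) v, φ (x.mulVec v) =
      (U * σ x).mulVec (fun i => S (v i)) := by
    intro x v
    rw [hφdef, ← Matrix.mulVec_mulVec]
    congr 1; ext i
    simp [Matrix.mulVec, dotProduct, hσ]
  set A := Algebra.adjoin K ({U} ∪ Set.range D) with hA
  have hcomm : ∀ x ∈ A, U * σ x = x * U := by
    intro x hx
    induction hx using Algebra.adjoin_induction with
    | mem x hx =>
      rcases hx with rfl | ⟨z, rfl⟩
      · congr 1
        ext i j
        rw [hσ, hU]
        split_ifs <;> simp [hSa]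
      · ext i j
        rw [hD, Matrix.diagonal_mul]
        have : σ (Matrix.diagonal fun i : Fin n => (S ^ (i : ℕ)) z) =
            Matrix.diagonal fun i : Fin n => (S ^ ((i : ℕ) + 1)) z := by
          ext i j
          rw [hσ, Matrix.diagonal_apply, Matrix.diagonal_apply]
          split_ifs
          · rw [pow_succ']; rfl
          · simp
        rw [this, Matrix.mul_diagonal, hU, mul_comm]
        split_ifs with h1 h2
        · rw [h1]
        · rw [h2.2, h2.1, Nat.sub_add_cancel hn0, hSn]; simp
        · simp
    | algebraMap r =>
      have : σ (algebraMap K _ r) = algebraMap K _ r := by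
        ext i j
        rw [hσ, Matrix.algebraMap_matrix_apply]
        split_ifs <;> simp
      rw [this]; exact (Algebra.commutes r U).symm
    | add x y _ _ hx hy => rw [map_add, mul_add, add_mul, hx, hy]
    | mul x y _ _ hx hy => rw [map_mul, ← mul_assoc, hx, mul_assoc, hy, mul_assoc]
  constructor
  · intro x hx
    have hdet : (x : Matrix (Fin n) (Fin n) L).det ≠ 0 := by
      intro hdet
      let W := LinearMap.range (x : Matrix (Fin n) (Fin n) L).mulVecLin
      have hW : ∀ v ∈ W, φ v ∈ W := by
        rintro _ ⟨w, rfl⟩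
        rw [Matrix.mulVecLin_apply, hφσ, hcomm _ x.2, ← Matrix.mulVec_mulVec]
        exact ⟨_, rfl⟩
      let ψ : W →+ W :=
        { toFun := fun v => ⟨φ v, hW v v.2⟩
          map_zero' := by ext1; simp
          map_add' := fun v w => by ext1; simp }
      have hψ : ∀ k (v : W), ((ψ^[k] v : W) : Fin n → L) = φ^[k] v := by
        intro k
        induction k with
        | zero => intro v; rfl
        | succ k ih => intro v; rw [Function.iterate_succ_apply, ih]; rfl
      obtain ⟨z, hz⟩ := aux_semilin S ψ (fun c v => Subtype.ext (hφs c v)) _ n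
        (Module.finBasis L W) a (fun v => Subtype.ext (by rw [hψ, hφn]; rfl))
      have hpos : 0 < Module.finrank L W := by
        rw [Module.finrank_pos_iff, Submodule.nontrivial_iff_ne_bot]
        intro h
        have h0 : (x : Matrix (Fin n) (Fin n) L).mulVecLin = 0 := LinearMap.range_eq_bot.mp h
        apply hx
        ext1
        apply Matrix.toLin'.injective
        rw [Matrix.toLin'_apply', h0]; simp
      have hlt : Module.finrank L W < n := by
        have : W ≠ ⊤ := by
          intro h
          have h0 : Function.Surjective (x : Matrix (Fin n) (Fin n) L).mulVec :=
            LinearMap.range_eq_top.mp h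
          rw [Matrix.mulVec_surjective_iff_isUnit, Matrix.isUnit_iff_isUnit_det, hdet] at h0
          simp at h0
        simpa using Submodule.finrank_lt this
      exact hnorm _ hpos (by omega) z (by rw [hz, map_pow])
    have hu : IsUnit (x : Matrix (Fin n) (Fin n) L) := by
      rw [Matrix.isUnit_iff_isUnit_det]; exact hdet.isUnit
    have hli : Function.Injective (LinearMap.mulLeft K x) := by
      intro y z hyz
      have := congrArg Subtype.val hyz
      simp only [LinearMap.mulLeft_apply, MulMemClass.coe_mul] at this
      exact Subtype.ext (hu.mul_left_cancel this)
    obtain ⟨y, hy⟩ := (LinearMap.injective_iff_surjective.mp hli) 1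
    have hy : x * y = 1 := hy
    have hy' : y * x = 1 := by
      ext1
      have := congrArg Subtype.val hy
      simp only [MulMemClass.coe_mul, OneMemClass.coe_one] at this ⊢
      exact mul_eq_one_comm.mp this
    exact ⟨⟨x, y, hy, hy'⟩, rfl⟩
  · let ρ : A →ₗ[K] (Fin n → L) :=
      { toFun := fun x => (x : Matrix (Fin n) (Fin n) L) ⟨0, hn0⟩
        map_add' := fun x y => rfl
        map_smul' := fun c x => rfl }
    have hρ : ∀ x : A, ρ x = (x : Matrix (Fin n) (Fin n) L) ⟨0, hn0⟩ := fun _ => rfl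
    have hρmul : ∀ x y : A, ρ (x * y) = Matrix.vecMul (ρ x) (y : Matrix (Fin n) (Fin n) L) :=
      fun x y => rfl
    have hinj : Function.Injective ρ := by
      rw [← LinearMap.ker_eq_bot, LinearMap.ker_eq_bot']
      intro x hx
      have hrow : ∀ k (hk : k < n), (x : Matrix (Fin n) (Fin n) L) ⟨k, hk⟩ = 0 := by
        intro k
        induction k with
        | zero => intro hk; exact hx
        | succ k ih =>
          intro hk
          apply Matrix.vecMul_injective_of_isUnit hUunit
          ext j
          have h1 := congrFun (congrFun (hcomm _ x.2) ⟨k + 1, hk⟩) j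
          have h2 : (U * σ x) ⟨k + 1, hk⟩ j = U.mulVec (fun i => σ x i j) ⟨k + 1, hk⟩ := rfl
          rw [h2, hmul1 _ _ (by simp), hσ] at h1
          have h3 := congrFun (ih (by omega)) j
          simp only [Nat.add_sub_cancel] at h1
          rw [h3] at h1
          simp only [Pi.zero_apply, map_zero] at h1
          refine Eq.trans h1.symm ?_
          exact (congrFun (Matrix.zero_vecMul U) j).symm
      ext i j
      exact congrFun (hrow i i.2) j
    have hUA : U ∈ A := Algebra.subset_adjoin (by simp)
    have hDA : ∀ z, D z ∈ A := fun z => Algebra.subset_adjoin (by simp)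
    have hsing : ∀ k (hk : k < n), ∃ x : A, ρ x = Pi.single (⟨n - 1 - k, by omega⟩ : Fin n) a := by
      intro k
      induction k with
      | zero =>
        intro hk
        refine ⟨⟨U, hUA⟩, ?_⟩
        rw [hρ]
        ext j
        simp only [hU, Pi.single_apply, Fin.ext_iff]
        simp
      | succ k ih =>
        intro hk
        obtain ⟨x, hx⟩ := ih (by omega)
        refine ⟨x * ⟨U, hUA⟩, ?_⟩
        rw [hρmul, hx, Matrix.single_vecMul]
        ext j
        simp only [Pi.smul_apply, Matrix.row_apply, hU, Pi.single_apply, Fin.ext_iff]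
        have e : (n - 1 - k = (j : ℕ) + 1) ↔ ((j : ℕ) = n - 1 - (k + 1)) := by omega
        have e2 : ¬ (n - 1 - k = 0) := by omega
        simp only [e, e2, false_and, if_false]
        split_ifs <;> simp
    have hsurj : Function.Surjective ρ := by
      rw [← LinearMap.range_eq_top, eq_top_iff]
      intro v _
      rw [← Finset.univ_sum_single v]
      refine Submodule.sum_mem _ fun j _ => ?_
      obtain ⟨x, hx⟩ := hsing (n - 1 - j) (by omega)
      have hj : (⟨n - 1 - (n - 1 - j), by omega⟩ : Fin n) = j := Fin.ext (by simp; omega)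
      rw [hj] at hx
      refine ⟨x * ⟨D ((S ^ (j : ℕ)).symm (a⁻¹ * v j)), hDA _⟩, ?_⟩
      rw [hρmul, hx, Matrix.single_vecMul]
      ext i
      simp only [Pi.smul_apply, Matrix.row_apply, hD, Pi.single_apply, Matrix.diagonal_apply]
      by_cases h : i = j
      · subst h
        simp only [if_true]
        rw [AlgEquiv.apply_symm_apply, smul_eq_mul, mul_inv_cancel_left₀ ha0]
      · simp [h, Ne.symm h]
    rw [(LinearEquiv.ofBijective ρ ⟨hinj, hsurj⟩).finrank_eq, Module.finrank_pi_fintype]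
    simp [hn, sq]
end
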